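/- arXiv:2007.07826 — 5 statements merged into one kernel-verified Lean document; each statement's English description precedes it below -/
import Mathlib

section
/- With the notation of the context: HL^d(A, L, Φ) holds if and only if PD^d(A, Φ) holds and, for every 0 ≤ k ≤ d/2, the map L^{d−2k} : A^k → A^{d−k} is an isomorphism. -/
open Module

namespace PaperHR

variable {V : Type} [AddCommGroup V] [Module ℝ V]

/-- Weak Poincaré duality `WPD^d`: `dim A^k = dim A^{d-k}` for every `k`. -/
def WPD (d : ℕ) (A : ℤ → Submodule ℝ V) : Prop :=
  ∀ k : ℤ, finrank ℝ (A k) = finrank ℝ (A (d - k))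

/-- Poincaré duality `PD^d(A, Φ)`: the bilinear form `Φ` is non-degenerate. -/
def PD (Φ : V →ₗ[ℝ] V →ₗ[ℝ] ℝ) : Prop :=
  ∀ x : V, (∀ y : V, Φ x y = 0) → x = 0

/-- The Hodge–Riemann form in degree `k`: `Q(a,b) = Φ(a, L^{d-2k} b)`. -/
def Q (Φ : V →ₗ[ℝ] V →ₗ[ℝ] ℝ) (L : V →ₗ[ℝ] V) (d k : ℕ) (x y : V) : ℝ :=
  Φ x ((L ^ (d - 2 * k)) y)

/-- Non-degeneracy of the form `Q` on `⨁_{0 ≤ k ≤ d/2} A^k`.  Since distinct graded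
pieces `A^j`, `A^k` (`j ≠ k`) are orthogonal for `Q` by definition, this is equivalent to
the non-degeneracy of the restriction of `Q` to each graded piece `A^k`, `2k ≤ d`. -/
def QNondeg (d : ℕ) (A : ℤ → Submodule ℝ V) (Φ : V →ₗ[ℝ] V →ₗ[ℝ] ℝ) (L : V →ₗ[ℝ] V) : Prop :=
  ∀ k : ℕ, 2 * k ≤ d → ∀ x ∈ A (k : ℤ), (∀ y ∈ A (k : ℤ), Q Φ L d k x y = 0) → x = 0

/-- Hard Lefschetz `HL^d(A, L, Φ)`. -/
def HL (d : ℕ) (A : ℤ → Submodule ℝ V) (Φ : V →ₗ[ℝ] V →ₗ[ℝ] ℝ) (L : V →ₗ[ℝ] V) : Prop :=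
  WPD d A ∧ QNondeg d A Φ L

/-- The maximal dimension of a subspace of `S` on which the form `B` is positive definite. -/
noncomputable def maxPosDim (B : V → V → ℝ) (S : Submodule ℝ V) : ℕ :=
  sSup {m : ℕ | ∃ T : Submodule ℝ V, T ≤ S ∧ finrank ℝ T = m ∧ ∀ x ∈ T, x ≠ 0 → 0 < B x x}

/-- The maximal dimension of a subspace of `S` on which the form `B` is negative definite. -/
noncomputable def maxNegDim (B : V → V → ℝ) (S : Submodule ℝ V) : ℕ :=
  sSup {m : ℕ | ∃ T : Submodule ℝ V, T ≤ S ∧ finrank ℝ T = m ∧ ∀ x ∈ T, x ≠ 0 → B x x < 0}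

/-- The signature of the restriction of the form `B` to `S`. -/
noncomputable def signature (B : V → V → ℝ) (S : Submodule ℝ V) : ℤ :=
  (maxPosDim B S : ℤ) - (maxNegDim B S : ℤ)

/-- Hodge–Riemann `HR^d(A, L, Φ)`. -/
def HR (d : ℕ) (A : ℤ → Submodule ℝ V) (Φ : V →ₗ[ℝ] V →ₗ[ℝ] ℝ) (L : V →ₗ[ℝ] V) : Prop :=
  WPD d A ∧ ∀ k : ℕ, 2 * k ≤ d →
    signature (Q Φ L d k) (A (k : ℤ)) =
      ∑ i ∈ Finset.range (k + 1),
        (-1 : ℤ) ^ i * ((finrank ℝ (A (i : ℤ)) : ℤ) - (finrank ℝ (A ((i : ℤ) - 1)) : ℤ))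

end PaperHR

namespace PaperHR

theorem pow_mem_aux {V : Type} [AddCommGroup V] [Module ℝ V]
    (A : ℤ → Submodule ℝ V) (L : V →ₗ[ℝ] V)
    (hL : ∀ k : ℤ, ∀ x ∈ A k, L x ∈ A (k + 1)) (n : ℕ) :
    ∀ k : ℤ, ∀ x ∈ A k, (L ^ n) x ∈ A (k + n) := by
  induction n with
  | zero => intro k x hx; simpa using hx
  | succ n ih =>
    intro k x hx
    have h := hL _ _ (ih k x hx)
    rw [pow_succ', Module.End.mul_apply]
    convert h using 2
    push_cast; ring

theorem pow_adj_aux {V : Type} [AddCommGroup V] [Module ℝ V]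
    (Φ : V →ₗ[ℝ] V →ₗ[ℝ] ℝ) (L : V →ₗ[ℝ] V)
    (hLadj : ∀ x y : V, Φ (L x) y = Φ x (L y)) (n : ℕ) :
    ∀ x y : V, Φ ((L ^ n) x) y = Φ x ((L ^ n) y) := by
  induction n with
  | zero => intro x y; simp
  | succ n ih =>
    intro x y
    rw [pow_succ', Module.End.mul_apply, hLadj, ih, ← Module.End.mul_apply, ← pow_succ, pow_succ']

theorem orth_aux {V : Type} [AddCommGroup V] [Module ℝ V]
    (d : ℕ) (A : ℤ → Submodule ℝ V) (hA : DirectSum.IsInternal A)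
    (Φ : V →ₗ[ℝ] V →ₗ[ℝ] ℝ)
    (hΦorth : ∀ j k : ℤ, j + k ≠ (d : ℤ) → ∀ x ∈ A j, ∀ y ∈ A k, Φ x y = 0)
    (j : ℤ) (x : V) (hx : x ∈ A j) (h : ∀ y ∈ A (d - j), Φ x y = 0) (y : V) : Φ x y = 0 := by
  have hy : y ∈ ⨆ i, A i := by rw [hA.submodule_iSup_eq_top]; trivial
  induction hy using Submodule.iSup_induction' with
  | mem i y hy =>
    by_cases hi : j + i = d
    · exact h y (by rwa [← hi, add_sub_cancel_left])
    · exact hΦorth j i hi x hx y hy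
  | zero => simp
  | add a b _ _ ha hb => rw [map_add, ha, hb, add_zero]

theorem comp_aux {V : Type} [AddCommGroup V] [Module ℝ V]
    (d : ℕ) (A : ℤ → Submodule ℝ V)
    (Φ : V →ₗ[ℝ] V →ₗ[ℝ] ℝ)
    (hΦorth : ∀ j k : ℤ, j + k ≠ (d : ℤ) → ∀ x ∈ A j, ∀ y ∈ A k, Φ x y = 0)
    (j : ℤ) (y : V) (hy : y ∈ A (d - j)) (f : DirectSum ℤ fun i => A i) :
    Φ (DirectSum.coeAddMonoidHom A f) y = Φ (f j : V) y := by
  induction f using DirectSum.induction_on with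
  | zero => simp
  | of i a =>
    rw [DirectSum.coeAddMonoidHom_of]
    by_cases hi : i = j
    · subst hi; rw [DirectSum.of_eq_same]
    · rw [DirectSum.of_eq_of_ne _ _ _ (Ne.symm hi)]
      rw [hΦorth i (d - j) (by omega) a a.2 y hy]; simp
  | add a b ha hb =>
    rw [map_add, map_add, LinearMap.add_apply, ha, hb, DirectSum.add_apply, Submodule.coe_add,
      map_add, LinearMap.add_apply]

theorem finrank_map_aux {V : Type} [AddCommGroup V] [Module ℝ V]
    (S : Submodule ℝ V) (M : V →ₗ[ℝ] V) (h : ∀ x ∈ S, M x = 0 → x = 0) :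
    finrank ℝ (Submodule.map M S) = finrank ℝ S := by
  have : Function.Injective (M.domRestrict S) := by
    rw [injective_iff_map_eq_zero]
    intro a ha
    exact Subtype.ext (h a a.2 ha)
  rw [← LinearMap.finrank_range_of_inj this, LinearMap.range_domRestrict]

end PaperHR

open PaperHR in
/-- `HL^d(A, L, Φ)` holds if and only if `PD^d(A, Φ)` holds and, for every
`0 ≤ k ≤ d/2`, the map `L^{d-2k} : A^k → A^{d-k}` is an isomorphism. -/
theorem statement1
    {V : Type} [AddCommGroup V] [Module ℝ V] [FiniteDimensional ℝ V]
    (d : ℕ) (A : ℤ → Submodule ℝ V)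
    (hA : DirectSum.IsInternal A)
    (hAneg : ∀ k : ℤ, k < 0 → A k = ⊥)
    (Φ : V →ₗ[ℝ] V →ₗ[ℝ] ℝ)
    (hΦsymm : ∀ x y : V, Φ x y = Φ y x)
    (hΦorth : ∀ j k : ℤ, j + k ≠ (d : ℤ) → ∀ x ∈ A j, ∀ y ∈ A k, Φ x y = 0)
    (L : V →ₗ[ℝ] V)
    (hL : ∀ k : ℤ, ∀ x ∈ A k, L x ∈ A (k + 1))
    (hLadj : ∀ x y : V, Φ (L x) y = Φ x (L y)) :
    HL d A Φ L ↔
      (PD Φ ∧ ∀ k : ℕ, 2 * k ≤ d →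
        (Submodule.map (L ^ (d - 2 * k)) (A (k : ℤ)) = A ((d : ℤ) - (k : ℤ)) ∧
          ∀ x ∈ A (k : ℤ), (L ^ (d - 2 * k)) x = 0 → x = 0)) := by
  have hpow := pow_mem_aux A L hL
  have hadj := pow_adj_aux Φ L hLadj
  have hmem : ∀ k : ℕ, 2 * k ≤ d → ∀ x ∈ A (k : ℤ), (L ^ (d - 2 * k)) x ∈ A ((d : ℤ) - k) := by
    intro k hk x hx
    have h := hpow (d - 2 * k) k x hx
    have e : (k : ℤ) + ((d - 2 * k : ℕ) : ℤ) = d - k := by omega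
    rwa [e] at h
  constructor
  · rintro ⟨hW, hQ⟩
    have hiso : ∀ k : ℕ, 2 * k ≤ d →
        (Submodule.map (L ^ (d - 2 * k)) (A (k : ℤ)) = A ((d : ℤ) - (k : ℤ)) ∧
          ∀ x ∈ A (k : ℤ), (L ^ (d - 2 * k)) x = 0 → x = 0) := by
      intro k hk
      have hinj : ∀ x ∈ A (k : ℤ), (L ^ (d - 2 * k)) x = 0 → x = 0 := by
        intro x hx h0
        refine hQ k hk x hx fun y _ => ?_
        unfold Q
        rw [← hadj, h0]; simp
      refine ⟨?_, hinj⟩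
      apply Submodule.eq_of_le_of_finrank_eq
      · rintro _ ⟨x, hx, rfl⟩
        exact hmem k hk x hx
      · rw [finrank_map_aux _ _ hinj, hW]
    refine ⟨?_, hiso⟩
    have key : ∀ j : ℤ, ∀ x ∈ A j, (∀ y ∈ A (d - j), Φ x y = 0) → x = 0 := by
      intro j x hx h
      by_cases h1 : j < 0
      · rw [hAneg j h1] at hx; simpa using hx
      by_cases h2 : (d : ℤ) < j
      · have h3 := hW j
        rw [hAneg (d - j) (by omega), finrank_bot] at h3
        rw [Submodule.finrank_eq_zero.mp h3] at hx
        simpa using hx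
      by_cases h3 : 2 * j ≤ d
      · obtain ⟨k, rfl⟩ := Int.eq_ofNat_of_zero_le (not_lt.mp h1)
        have hk : 2 * k ≤ d := by omega
        exact hQ k hk x hx fun y hy => h _ (hmem k hk y hy)
      · obtain ⟨k, hk'⟩ := Int.eq_ofNat_of_zero_le (show 0 ≤ (d : ℤ) - j by omega)
        have hk : 2 * k ≤ d := by omega
        have e : j = d - k := by omega
        rw [hk'] at h
        rw [e, ← (hiso k hk).1] at hx
        obtain ⟨x', hx', rfl⟩ := hx
        rw [hQ k hk x' hx' fun y hy => by unfold Q; rw [← hadj]; exact h y hy]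
        simp
    intro x hx
    obtain ⟨f, rfl⟩ := hA.2 x
    have : f = 0 := by
      refine DFinsupp.ext fun j => Subtype.ext ?_
      refine key j _ (f j).2 fun y hy => ?_
      rw [← comp_aux d A Φ hΦorth j y hy f]
      exact hx y
    rw [this]; simp
  · rintro ⟨hP, hiso⟩
    have key : ∀ j : ℤ, ∀ x ∈ A j, (∀ y ∈ A (d - j), Φ x y = 0) → x = 0 :=
      fun j x hx h => hP x (orth_aux d A hA Φ hΦorth j x hx h)
    have hhalf : ∀ k : ℤ, 2 * k ≤ d → finrank ℝ (A k) = finrank ℝ (A (d - k)) := by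
      intro k hk
      by_cases h1 : k < 0
      · have : A (d - k) = ⊥ := by
          rw [eq_bot_iff]
          intro x hx
          refine (Submodule.mem_bot ℝ).2 (key _ x hx fun y hy => ?_)
          rw [sub_sub_cancel, hAneg k h1, Submodule.mem_bot] at hy
          rw [hy, map_zero]
        rw [this, hAneg k h1]
      · obtain ⟨n, rfl⟩ := Int.eq_ofNat_of_zero_le (not_lt.mp h1)
        obtain ⟨hm, hi⟩ := hiso n (by omega)
        rw [← hm, finrank_map_aux _ _ hi]
    refine ⟨fun k => ?_, fun k hk x hx h => ?_⟩
    · by_cases hk : 2 * k ≤ d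
      · exact hhalf k hk
      · have := hhalf (d - k) (by omega)
        rw [sub_sub_cancel] at this
        exact this.symm
    · refine key k x hx fun y hy => ?_
      rw [← (hiso k hk).1] at hy
      obtain ⟨z, hz, rfl⟩ := hy
      exact h z hz
end

section
/- With the notation of the context: HR^d(A, L, Φ) holds if and only if WPD^d(A) holds and, for every 0 ≤ k ≤ d/2, the restriction of (−1)^k Q to the primitive part A^k_prim is positive definite. -/
open Module

namespace PaperHR

section Helpers

variable {W : Type} [AddCommGroup W] [Module ℝ W] [FiniteDimensional ℝ W]

lemma finrank_sup_disj {S T : Submodule ℝ W} (h : Disjoint S T) :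
    finrank ℝ (S ⊔ T : Submodule ℝ W) = finrank ℝ S + finrank ℝ T := by
  have := Submodule.finrank_sup_add_finrank_inf_eq S T
  rw [h.eq_bot, finrank_bot] at this
  omega

lemma finrank_le_of_disj {S T U : Submodule ℝ W} (h : Disjoint S T) (hS : S ≤ U) (hT : T ≤ U) :
    finrank ℝ S + finrank ℝ T ≤ finrank ℝ U := by
  rw [← finrank_sup_disj h]
  exact Submodule.finrank_mono (sup_le hS hT)

lemma disj_pos_nonpos (B : W → W → ℝ) {T N : Submodule ℝ W}
    (hT : ∀ x ∈ T, x ≠ 0 → 0 < B x x) (hN : ∀ x ∈ N, x ≠ 0 → B x x ≤ 0) : Disjoint T N := by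
  rw [Submodule.disjoint_def]
  intro x hx hx'
  by_contra h
  exact absurd (hT x hx h) (not_lt.mpr (hN x hx' h))

lemma maxPos_eq (B : W → W → ℝ) {S T N : Submodule ℝ W} (hTS : T ≤ S) (hNS : N ≤ S)
    (hT : ∀ x ∈ T, x ≠ 0 → 0 < B x x) (hN : ∀ x ∈ N, x ≠ 0 → B x x ≤ 0)
    (hd : finrank ℝ S ≤ finrank ℝ T + finrank ℝ N) : maxPosDim B S = finrank ℝ T := by
  apply IsGreatest.csSup_eq
  refine ⟨⟨T, hTS, rfl, hT⟩, ?_⟩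
  rintro m ⟨T', hT'S, rfl, hT'⟩
  have := finrank_le_of_disj (disj_pos_nonpos B hT' hN) hT'S hNS
  omega

lemma exists_max (B : W → W → ℝ) (S : Submodule ℝ W) :
    ∃ T : Submodule ℝ W, T ≤ S ∧ finrank ℝ T = maxPosDim B S ∧ (∀ x ∈ T, x ≠ 0 → 0 < B x x) ∧
      ∀ T' : Submodule ℝ W, T' ≤ S → (∀ x ∈ T', x ≠ 0 → 0 < B x x) →
        finrank ℝ T' ≤ finrank ℝ T := by
  have hb : BddAbove {m : ℕ | ∃ T : Submodule ℝ W, T ≤ S ∧ finrank ℝ T = m ∧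
      ∀ x ∈ T, x ≠ 0 → 0 < B x x} := by
    refine ⟨finrank ℝ S, ?_⟩
    rintro m ⟨T, hT, rfl, -⟩
    exact Submodule.finrank_mono hT
  have hne : {m : ℕ | ∃ T : Submodule ℝ W, T ≤ S ∧ finrank ℝ T = m ∧
      ∀ x ∈ T, x ≠ 0 → 0 < B x x}.Nonempty :=
    ⟨0, ⊥, bot_le, finrank_bot ℝ W, fun x hx h => absurd ((Submodule.mem_bot ℝ).1 hx) h⟩
  obtain ⟨T, h1, h2, h3⟩ := Nat.sSup_mem hne hb
  refine ⟨T, h1, h2, h3, fun T' h h' => ?_⟩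
  rw [h2]
  exact le_csSup hb ⟨T', h, rfl, h'⟩

lemma exists_decomp (B : W →ₗ[ℝ] W →ₗ[ℝ] ℝ) (hB : ∀ x y, B x y = B y x) (S : Submodule ℝ W) :
    ∃ T N : Submodule ℝ W, T ≤ S ∧ N ≤ S ∧ (∀ x ∈ T, x ≠ 0 → 0 < B x x) ∧
      (∀ x ∈ N, x ≠ 0 → B x x ≤ 0) ∧ finrank ℝ S ≤ finrank ℝ T + finrank ℝ N := by
  obtain ⟨T, hTS, -, hT, hmax⟩ := exists_max (fun x y => B x y) S
  let g : S →ₗ[ℝ] (T →ₗ[ℝ] ℝ) := (LinearMap.lcomp ℝ ℝ T.subtype) ∘ₗ B ∘ₗ S.subtype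
  have hg : ∀ (s : S) (t : T), g s t = B s t := fun s t => rfl
  refine ⟨T, (LinearMap.ker g).map S.subtype, hTS, Submodule.map_subtype_le _ _, hT, ?_, ?_⟩
  · rintro _ ⟨x, hx, rfl⟩ hx0
    by_contra hpos
    push Not at hpos
    have hort : ∀ t ∈ T, B x t = 0 := fun t ht => by
      rw [← hg x ⟨t, ht⟩, LinearMap.mem_ker.1 hx]; rfl
    have hxT : (x : W) ∉ T := fun h => by
      have := hort x h
      simp only [Submodule.subtype_apply] at hpos
      linarith
    have hdis : Disjoint T (Submodule.span ℝ {(x : W)}) := by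
      rw [Submodule.disjoint_span_singleton' (by simpa using hx0)]
      exact hxT
    have h1 := hmax (T ⊔ Submodule.span ℝ {(x : W)})
      (sup_le hTS (by rw [Submodule.span_singleton_le_iff_mem]; exact x.2)) (by
        intro y hy hy0
        obtain ⟨t, ht, z, hz, rfl⟩ := Submodule.mem_sup.1 hy
        obtain ⟨c, rfl⟩ := Submodule.mem_span_singleton.1 hz
        have e : B (t + c • (x : W)) (t + c • (x : W)) = B t t + c ^ 2 * B x x := by
          simp only [map_add, map_smul, LinearMap.add_apply, LinearMap.smul_apply, smul_eq_mul,
            hort t ht, hB t x]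
          ring
        simp only [e]
        simp only [Submodule.subtype_apply] at hpos
        by_cases ht0 : t = 0
        · subst ht0
          have hc : c ≠ 0 := by rintro rfl; simp at hy0
          simp only [map_zero, LinearMap.zero_apply, zero_add]
          positivity
        · have := hT t ht ht0
          positivity)
    rw [finrank_sup_disj hdis, finrank_span_singleton (by simpa using hx0)] at h1
    omega
  · have h1 := g.finrank_range_add_finrank_ker
    have h2 : finrank ℝ (LinearMap.range g) ≤ finrank ℝ (T →ₗ[ℝ] ℝ) := Submodule.finrank_le _
    have h3 : finrank ℝ (T →ₗ[ℝ] ℝ) = finrank ℝ T := Subspace.dual_finrank_eq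
    rw [Submodule.finrank_map_subtype_eq]
    omega

lemma sup_sign (B : W →ₗ[ℝ] W →ₗ[ℝ] ℝ) (hB : ∀ x y, B x y = B y x) {U P : Submodule ℝ W}
    (hort : ∀ x ∈ U, ∀ y ∈ P, B x y = 0) {x : W} (hx : x ∈ U ⊔ P) :
    ∃ u ∈ U, ∃ p ∈ P, x = u + p ∧ B x x = B u u + B p p := by
  obtain ⟨u, hu, p, hp, rfl⟩ := Submodule.mem_sup.1 hx
  refine ⟨u, hu, p, hp, rfl, ?_⟩
  simp only [map_add, LinearMap.add_apply, hB p u, hort u hu p hp]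
  ring

lemma maxPos_sup (B : W →ₗ[ℝ] W →ₗ[ℝ] ℝ) (hB : ∀ x y, B x y = B y x) {U P : Submodule ℝ W}
    (hdis : Disjoint U P) (hort : ∀ x ∈ U, ∀ y ∈ P, B x y = 0) :
    maxPosDim (fun x y => B x y) (U ⊔ P) =
      maxPosDim (fun x y => B x y) U + maxPosDim (fun x y => B x y) P := by
  obtain ⟨T, N, hTS, hNS, hT, hN, hd⟩ := exists_decomp B hB U
  obtain ⟨T', N', hTS', hNS', hT', hN', hd'⟩ := exists_decomp B hB P
  rw [maxPos_eq (fun x y => B x y) hTS hNS hT hN hd,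
    maxPos_eq (fun x y => B x y) hTS' hNS' hT' hN' hd',
    ← finrank_sup_disj (hdis.mono hTS hTS')]
  apply maxPos_eq (fun x y => B x y) (sup_le_sup hTS hTS') (sup_le_sup hNS hNS')
  · intro x hx hx0
    obtain ⟨u, hu, p, hp, rfl, e⟩ :=
      sup_sign B hB (fun x hx y hy => hort x (hTS hx) y (hTS' hy)) hx
    simp only [e]
    by_cases hu0 : u = 0
    · subst hu0
      have := hT' p hp (by simpa using hx0)
      simpa using this
    · have h1 := hT u hu hu0
      by_cases hp0 : p = 0
      · subst hp0; simpa using h1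
      · have := hT' p hp hp0
        linarith
  · intro x hx hx0
    obtain ⟨u, hu, p, hp, rfl, e⟩ :=
      sup_sign B hB (fun x hx y hy => hort x (hNS hx) y (hNS' hy)) hx
    simp only [e]
    have h1 : B u u ≤ 0 := by
      by_cases h : u = 0
      · simp [h]
      · exact hN u hu h
    have h2 : B p p ≤ 0 := by
      by_cases h : p = 0
      · simp [h]
      · exact hN' p hp h
    linarith
  · rw [finrank_sup_disj hdis, finrank_sup_disj (hdis.mono hTS hTS'),
      finrank_sup_disj (hdis.mono hNS hNS')]
    omega

lemma finrank_map_disj (f : W →ₗ[ℝ] W) {S : Submodule ℝ W} (hf : ∀ x ∈ S, f x = 0 → x = 0) :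
    finrank ℝ (S.map f) = finrank ℝ S := by
  have h : Function.Injective (f.domRestrict S) := by
    rw [injective_iff_map_eq_zero]
    intro x hx
    exact Subtype.ext (hf x x.2 hx)
  rw [← LinearMap.finrank_range_of_inj h, LinearMap.range_domRestrict]

lemma maxPos_map (B B' : W →ₗ[ℝ] W →ₗ[ℝ] ℝ) (hB : ∀ x y, B x y = B y x) {S : Submodule ℝ W}
    (f : W →ₗ[ℝ] W) (hf : ∀ x ∈ S, f x = 0 → x = 0) (hff : ∀ x, B' (f x) (f x) = B x x) :
    maxPosDim (fun x y => B' x y) (S.map f) = maxPosDim (fun x y => B x y) S := by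
  obtain ⟨T, N, hTS, hNS, hT, hN, hd⟩ := exists_decomp B hB S
  rw [maxPos_eq (fun x y => B x y) hTS hNS hT hN hd,
    ← finrank_map_disj f (fun x hx => hf x (hTS hx))]
  apply maxPos_eq (fun x y => B' x y) (Submodule.map_mono hTS) (Submodule.map_mono hNS)
  · rintro _ ⟨x, hx, rfl⟩ h0
    simp only [hff]
    exact hT x hx (by rintro rfl; simp at h0)
  · rintro _ ⟨x, hx, rfl⟩ h0
    simp only [hff]
    exact hN x hx (by rintro rfl; simp at h0)
  · rw [finrank_map_disj f hf, finrank_map_disj f (fun x hx => hf x (hTS hx)),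
      finrank_map_disj f (fun x hx => hf x (hNS hx))]
    exact hd

lemma maxNeg_eq_neg (B : W →ₗ[ℝ] W →ₗ[ℝ] ℝ) (S : Submodule ℝ W) :
    maxNegDim (fun x y => B x y) S = maxPosDim (fun x y => (-B) x y) S := by
  simp [maxNegDim, maxPosDim]

lemma sig_sup (B : W →ₗ[ℝ] W →ₗ[ℝ] ℝ) (hB : ∀ x y, B x y = B y x) {U P : Submodule ℝ W}
    (hdis : Disjoint U P) (hort : ∀ x ∈ U, ∀ y ∈ P, B x y = 0) :
    signature (fun x y => B x y) (U ⊔ P) =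
      signature (fun x y => B x y) U + signature (fun x y => B x y) P := by
  simp only [signature, maxNeg_eq_neg]
  rw [maxPos_sup B hB hdis hort, maxPos_sup (-B) (by simp [hB]) hdis
    (fun x hx y hy => by simp [hort x hx y hy])]
  push_cast
  ring

lemma sig_map (B B' : W →ₗ[ℝ] W →ₗ[ℝ] ℝ) (hB : ∀ x y, B x y = B y x) {S : Submodule ℝ W}
    (f : W →ₗ[ℝ] W) (hf : ∀ x ∈ S, f x = 0 → x = 0) (hff : ∀ x, B' (f x) (f x) = B x x) :
    signature (fun x y => B' x y) (S.map f) = signature (fun x y => B x y) S := by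
  simp only [signature, maxNeg_eq_neg]
  rw [maxPos_map B B' hB f hf hff, maxPos_map (-B) (-B') (by simp [hB]) f hf (by simp [hff])]

lemma sig_neg (B : W →ₗ[ℝ] W →ₗ[ℝ] ℝ) (S : Submodule ℝ W) :
    signature (fun x y => (-B) x y) S = - signature (fun x y => B x y) S := by
  have h : (- -B) = B := neg_neg B
  simp only [signature, maxNeg_eq_neg]
  rw [h]
  ring

lemma sig_eq_finrank (B : W →ₗ[ℝ] W →ₗ[ℝ] ℝ) (S : Submodule ℝ W) :
    signature (fun x y => B x y) S = finrank ℝ S ↔ ∀ x ∈ S, x ≠ 0 → 0 < B x x := by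
  constructor
  · intro h
    obtain ⟨T, hTS, hTd, hT, -⟩ := exists_max (fun x y => B x y) S
    have h1 := Submodule.finrank_mono hTS
    have : finrank ℝ S ≤ finrank ℝ T := by
      simp only [signature] at h
      omega
    have e := Submodule.eq_of_le_of_finrank_le hTS this
    rw [← e]
    exact hT
  · intro h
    have h1 : maxPosDim (fun x y => B x y) S = finrank ℝ S :=
      maxPos_eq (fun x y => B x y) le_rfl bot_le h (by simp) (by simp)
    have h2 : maxNegDim (fun x y => B x y) S = 0 := by
      rw [maxNeg_eq_neg, maxPos_eq (fun x y => (-B) x y) (T := ⊥) bot_le le_rfl (by simp)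
        (fun x hx h0 => by have := h x hx h0; simp only [LinearMap.neg_apply]; linarith)
        (by simp), finrank_bot]
    simp [signature, h1, h2]

lemma sig_eq_iff (B : W →ₗ[ℝ] W →ₗ[ℝ] ℝ) (S : Submodule ℝ W) (k : ℕ) :
    signature (fun x y => B x y) S = (-1) ^ k * finrank ℝ S ↔
      ∀ x ∈ S, x ≠ 0 → 0 < (-1 : ℝ) ^ k * B x x := by
  rcases Nat.even_or_odd k with hk | hk
  · simp only [hk.neg_one_pow, one_mul]
    exact sig_eq_finrank B S
  · simp only [hk.neg_one_pow]
    have h1 := sig_eq_finrank (-B) S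
    rw [sig_neg] at h1
    simp only [LinearMap.neg_apply] at h1
    simp only [neg_one_mul]
    rw [← h1]
    omega

lemma pow_adj (Φ : W →ₗ[ℝ] W →ₗ[ℝ] ℝ) (L : W →ₗ[ℝ] W)
    (hLadj : ∀ x y : W, Φ (L x) y = Φ x (L y)) (n : ℕ) :
    ∀ x y : W, Φ ((L ^ n) x) y = Φ x ((L ^ n) y) := by
  induction n with
  | zero => simp
  | succ n ih =>
    intro x y
    rw [pow_succ', Module.End.mul_apply, hLadj, ih, ← Module.End.mul_apply, ← pow_succ, pow_succ']

lemma pow_mem_deg (A : ℤ → Submodule ℝ W) (L : W →ₗ[ℝ] W)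
    (hL : ∀ k : ℤ, ∀ x ∈ A k, L x ∈ A (k + 1)) (n : ℕ) :
    ∀ k : ℤ, ∀ x ∈ A k, (L ^ n) x ∈ A (k + n) := by
  induction n with
  | zero => simp
  | succ n ih =>
    intro k x hx
    rw [pow_succ', Module.End.mul_apply]
    have := hL _ _ (ih k x hx)
    push_cast
    rwa [← add_assoc]

/-- The Hodge-Riemann form as a bilinear map. -/
def BQ (Φ : W →ₗ[ℝ] W →ₗ[ℝ] ℝ) (L : W →ₗ[ℝ] W) (d k : ℕ) : W →ₗ[ℝ] W →ₗ[ℝ] ℝ :=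
  Φ.compl₂ (L ^ (d - 2 * k))

lemma BQ_apply (Φ : W →ₗ[ℝ] W →ₗ[ℝ] ℝ) (L : W →ₗ[ℝ] W) (d k : ℕ) (x y : W) :
    BQ Φ L d k x y = Φ x ((L ^ (d - 2 * k)) y) := rfl

lemma Q_eq (Φ : W →ₗ[ℝ] W →ₗ[ℝ] ℝ) (L : W →ₗ[ℝ] W) (d k : ℕ) :
    Q Φ L d k = fun x y => BQ Φ L d k x y := rfl

lemma BQ_symm (Φ : W →ₗ[ℝ] W →ₗ[ℝ] ℝ) (L : W →ₗ[ℝ] W) (d k : ℕ)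
    (hΦsymm : ∀ x y : W, Φ x y = Φ y x) (hLadj : ∀ x y : W, Φ (L x) y = Φ x (L y)) (x y : W) :
    BQ Φ L d k x y = BQ Φ L d k y x := by
  rw [BQ_apply, BQ_apply, ← pow_adj Φ L hLadj, hΦsymm]

/-- Injectivity of the Lefschetz map in degree `k`, expressed by nondegeneracy. -/
def ND (A : ℤ → Submodule ℝ W) (Φ : W →ₗ[ℝ] W →ₗ[ℝ] ℝ) (L : W →ₗ[ℝ] W) (d k : ℕ) : Prop :=
  ∀ x ∈ A (k : ℤ), (∀ y ∈ A (k : ℤ), BQ Φ L d k x y = 0) → x = 0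

/-- The primitive part. -/
def Prim (A : ℤ → Submodule ℝ W) (L : W →ₗ[ℝ] W) (d k : ℕ) : Submodule ℝ W :=
  A (k : ℤ) ⊓ LinearMap.ker (L ^ (d - 2 * k + 1))

lemma step_decomp (d : ℕ) (A : ℤ → Submodule ℝ W) (Φ : W →ₗ[ℝ] W →ₗ[ℝ] ℝ) (L : W →ₗ[ℝ] W)
    (hΦsymm : ∀ x y : W, Φ x y = Φ y x)
    (hL : ∀ k : ℤ, ∀ x ∈ A k, L x ∈ A (k + 1))
    (hLadj : ∀ x y : W, Φ (L x) y = Φ x (L y)) (hW : WPD d A) (k : ℕ) (hk : 2 * (k + 1) ≤ d)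
    (hnd : ND A Φ L d k) :
    (∀ x ∈ A (k : ℤ), L x = 0 → x = 0) ∧
    Disjoint ((A (k : ℤ)).map L) (Prim A L d (k + 1)) ∧
    (∀ x ∈ (A (k : ℤ)).map L, ∀ y ∈ Prim A L d (k + 1), BQ Φ L d (k + 1) x y = 0) ∧
    (A (k : ℤ)).map L ⊔ Prim A L d (k + 1) = A ((k + 1 : ℕ) : ℤ) ∧
    (∀ x y, BQ Φ L d (k + 1) (L x) (L y) = BQ Φ L d k x y) := by
  have hinj : ∀ x ∈ A (k : ℤ), (L ^ (d - 2 * k)) x = 0 → x = 0 := by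
    intro x hx h0
    apply hnd x hx
    intro y hy
    rw [BQ_apply, ← pow_adj Φ L hLadj, h0]
    simp
  have e1 : d - 2 * (k + 1) + 1 + 1 = d - 2 * k := by omega
  have hmap : (A (k : ℤ)).map (L ^ (d - 2 * k)) = A ((d : ℤ) - k) := by
    apply Submodule.eq_of_le_of_finrank_le
    · rintro _ ⟨x, hx, rfl⟩
      have := pow_mem_deg A L hL (d - 2 * k) k x hx
      have e : (k : ℤ) + ((d - 2 * k : ℕ) : ℤ) = d - k := by omega
      rwa [e] at this
    · rw [finrank_map_disj _ hinj, hW k]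
  have hLk : ∀ x ∈ A (k : ℤ), L x ∈ A ((k + 1 : ℕ) : ℤ) := fun x hx => by
    push_cast; exact hL _ x hx
  refine ⟨?_, ?_, ?_, ?_, ?_⟩
  · intro x hx h0
    apply hinj x hx
    rw [← e1, pow_succ, Module.End.mul_apply, h0, map_zero]
  · rw [Submodule.disjoint_def]
    rintro _ ⟨x, hx, rfl⟩ ⟨-, h⟩
    rw [SetLike.mem_coe, LinearMap.mem_ker, ← Module.End.mul_apply, ← pow_succ, e1] at h
    rw [hinj x hx h, map_zero]
  · rintro _ ⟨x, hx, rfl⟩ y ⟨-, h⟩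
    rw [SetLike.mem_coe, LinearMap.mem_ker] at h
    rw [BQ_apply, hLadj, ← Module.End.mul_apply, ← pow_succ', h, map_zero]
  · apply le_antisymm
    · apply sup_le
      · rintro _ ⟨x, hx, rfl⟩
        exact hLk x hx
      · exact inf_le_left
    · intro b hb
      have h1 := pow_mem_deg A L hL (d - 2 * (k + 1) + 1) _ b hb
      have e : ((k + 1 : ℕ) : ℤ) + ((d - 2 * (k + 1) + 1 : ℕ) : ℤ) = d - k := by omega
      rw [e, ← hmap] at h1
      obtain ⟨a, ha, hab⟩ := h1
      refine Submodule.mem_sup.2 ⟨L a, ⟨a, ha, rfl⟩, b - L a, ⟨?_, ?_⟩, by abel⟩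
      · exact Submodule.sub_mem _ hb (hLk a ha)
      · rw [SetLike.mem_coe, LinearMap.mem_ker, map_sub, ← hab, ← Module.End.mul_apply,
          ← pow_succ, e1, sub_self]
  · intro x y
    rw [BQ_apply, BQ_apply, hLadj, ← Module.End.mul_apply, ← pow_succ', ← Module.End.mul_apply,
      ← pow_succ, e1]

/-- The expected signature in degree `k`. -/
noncomputable def expSig (A : ℤ → Submodule ℝ W) (k : ℕ) : ℤ :=
  ∑ i ∈ Finset.range (k + 1),
    (-1 : ℤ) ^ i * ((finrank ℝ (A (i : ℤ)) : ℤ) - (finrank ℝ (A ((i : ℤ) - 1)) : ℤ))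

lemma step_zero (d : ℕ) (A : ℤ → Submodule ℝ W) (Φ : W →ₗ[ℝ] W →ₗ[ℝ] ℝ) (L : W →ₗ[ℝ] W)
    (hAneg : ∀ k : ℤ, k < 0 → A k = ⊥)
    (hL : ∀ k : ℤ, ∀ x ∈ A k, L x ∈ A (k + 1)) (hW : WPD d A) :
    (signature (fun x y => BQ Φ L d 0 x y) (A ((0 : ℕ) : ℤ)) = expSig A 0 ↔
      ∀ x ∈ Prim A L d 0, x ≠ 0 → 0 < (-1 : ℝ) ^ 0 * BQ Φ L d 0 x x) ∧
    ((∀ x ∈ Prim A L d 0, x ≠ 0 → 0 < (-1 : ℝ) ^ 0 * BQ Φ L d 0 x x) → ND A Φ L d 0) := by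
  have hP : Prim A L d 0 = A ((0 : ℕ) : ℤ) := by
    apply inf_eq_left.2
    intro x hx
    have h1 := pow_mem_deg A L hL (d - 2 * 0 + 1) _ x hx
    have h2 : A (((0 : ℕ) : ℤ) + ((d - 2 * 0 + 1 : ℕ) : ℤ)) = ⊥ := by
      rw [← Submodule.finrank_eq_zero (R := ℝ), hW, hAneg, finrank_bot]
      push_cast
      omega
    rw [h2, Submodule.mem_bot] at h1
    exact h1
  rw [hP]
  constructor
  · rw [← sig_eq_iff]
    have h1 : finrank ℝ (A (-1)) = 0 := by rw [hAneg (-1) (by norm_num), finrank_bot]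
    simp [expSig, h1]
  · intro h x hx h0
    by_contra hne
    have := h x hx hne
    rw [h0 x hx] at this
    simp at this

lemma step_succ (d : ℕ) (A : ℤ → Submodule ℝ W) (Φ : W →ₗ[ℝ] W →ₗ[ℝ] ℝ) (L : W →ₗ[ℝ] W)
    (hΦsymm : ∀ x y : W, Φ x y = Φ y x)
    (hL : ∀ k : ℤ, ∀ x ∈ A k, L x ∈ A (k + 1))
    (hLadj : ∀ x y : W, Φ (L x) y = Φ x (L y)) (hW : WPD d A) (k : ℕ) (hk : 2 * (k + 1) ≤ d)
    (hnd : ND A Φ L d k)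
    (hs : signature (fun x y => BQ Φ L d k x y) (A (k : ℤ)) = expSig A k) :
    (signature (fun x y => BQ Φ L d (k + 1) x y) (A ((k + 1 : ℕ) : ℤ)) = expSig A (k + 1) ↔
      ∀ x ∈ Prim A L d (k + 1), x ≠ 0 → 0 < (-1 : ℝ) ^ (k + 1) * BQ Φ L d (k + 1) x x) ∧
    ((∀ x ∈ Prim A L d (k + 1), x ≠ 0 → 0 < (-1 : ℝ) ^ (k + 1) * BQ Φ L d (k + 1) x x) →
      ND A Φ L d (k + 1)) := by
  obtain ⟨hi, hdis, hort, hsup, hiso⟩ := step_decomp d A Φ L hΦsymm hL hLadj hW k hk hnd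
  have hsy := BQ_symm Φ L d (k + 1) hΦsymm hLadj
  constructor
  · have hdim := finrank_sup_disj hdis
    rw [hsup, finrank_map_disj L hi] at hdim
    have hE : expSig A (k + 1) = expSig A k + (-1) ^ (k + 1) * finrank ℝ (Prim A L d (k + 1)) := by
      have e : (((k + 1 : ℕ) : ℤ) - 1) = k := by push_cast; ring
      rw [expSig, Finset.sum_range_succ, ← expSig, e, hdim]
      push_cast
      ring
    have hS := sig_sup _ hsy hdis hort
    rw [hsup, sig_map (BQ Φ L d k) _ (BQ_symm Φ L d k hΦsymm hLadj) L hi (fun x => hiso x x),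
      hs] at hS
    rw [← sig_eq_iff, hS, hE]
    exact add_right_inj _
  · intro h x hx h0
    rw [← hsup] at hx
    obtain ⟨_, ⟨a, ha, rfl⟩, p, hp, rfl⟩ := Submodule.mem_sup.1 hx
    have hp0 : p = 0 := by
      by_contra hne
      have h1 := h p hp hne
      have h2 := h0 p hp.1
      rw [map_add, LinearMap.add_apply, hort _ ⟨a, ha, rfl⟩ p hp, zero_add] at h2
      rw [h2] at h1
      simp at h1
    subst hp0
    have ha0 : a = 0 := by
      apply hnd a ha
      intro y hy
      have := h0 (L y) (by push_cast; exact hL _ y hy)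
      rwa [add_zero, hiso] at this
    simp [ha0]

end Helpers

end PaperHR

open PaperHR in
/-- `HR^d(A, L, Φ)` holds if and only if `WPD^d(A)` holds and, for every
`0 ≤ k ≤ d/2`, the restriction of `(-1)^k Q` to the primitive part
`A^k_prim = ker(L^{d-2k+1}) ∩ A^k` is positive definite. -/
theorem statement2
    {V : Type} [AddCommGroup V] [Module ℝ V] [FiniteDimensional ℝ V]
    (d : ℕ) (A : ℤ → Submodule ℝ V)
    (hA : DirectSum.IsInternal A)
    (hAneg : ∀ k : ℤ, k < 0 → A k = ⊥)
    (Φ : V →ₗ[ℝ] V →ₗ[ℝ] ℝ)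
    (hΦsymm : ∀ x y : V, Φ x y = Φ y x)
    (hΦorth : ∀ j k : ℤ, j + k ≠ (d : ℤ) → ∀ x ∈ A j, ∀ y ∈ A k, Φ x y = 0)
    (L : V →ₗ[ℝ] V)
    (hL : ∀ k : ℤ, ∀ x ∈ A k, L x ∈ A (k + 1))
    (hLadj : ∀ x y : V, Φ (L x) y = Φ x (L y)) :
    HR d A Φ L ↔
      (WPD d A ∧ ∀ k : ℕ, 2 * k ≤ d →
        ∀ x ∈ A (k : ℤ) ⊓ LinearMap.ker (L ^ (d - 2 * k + 1)), x ≠ 0 →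
          0 < (-1 : ℝ) ^ k * Q Φ L d k x x) := by
  have key : WPD d A → ∀ k : ℕ, 2 * k ≤ d →
      ((∀ i ≤ k, signature (fun x y => BQ Φ L d i x y) (A (i : ℤ)) = expSig A i) ↔
        ∀ i ≤ k, ∀ x ∈ Prim A L d i, x ≠ 0 → 0 < (-1 : ℝ) ^ i * BQ Φ L d i x x) ∧
      ((∀ i ≤ k, ∀ x ∈ Prim A L d i, x ≠ 0 → 0 < (-1 : ℝ) ^ i * BQ Φ L d i x x) →
        ND A Φ L d k) := by
    intro hW k
    induction k with
    | zero =>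
      intro _
      have h := step_zero d A Φ L hAneg hL hW
      simp only [Nat.le_zero, forall_eq]
      exact h
    | succ k ih =>
      intro hk
      obtain ⟨ih1, ih2⟩ := ih (by omega)
      refine ⟨⟨fun h => ?_, fun h => ?_⟩, fun h => ?_⟩
      · have h' := fun i (hi : i ≤ k) => h i (by omega)
        have hp := ih1.1 h'
        have hst := step_succ d A Φ L hΦsymm hL hLadj hW k hk (ih2 hp) (h' k le_rfl)
        intro i hi
        rcases Nat.le_succ_iff.1 hi with hi | rfl
        · exact hp i hi
        · exact hst.1.1 (h _ le_rfl)
      · have h' := fun i (hi : i ≤ k) => h i (by omega)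
        have hp := ih1.2 h'
        have hst := step_succ d A Φ L hΦsymm hL hLadj hW k hk (ih2 h') (hp k le_rfl)
        intro i hi
        rcases Nat.le_succ_iff.1 hi with hi | rfl
        · exact hp i hi
        · exact hst.1.2 (h _ le_rfl)
      · have h' := fun i (hi : i ≤ k) => h i (by omega)
        have hst := step_succ d A Φ L hΦsymm hL hLadj hW k hk (ih2 h') (ih1.2 h' k le_rfl)
        exact hst.2 (h _ le_rfl)
  constructor
  · rintro ⟨hW, h⟩
    refine ⟨hW, fun k hk => ?_⟩
    exact (key hW k hk).1.1 (fun i hi => h i (by omega)) k le_rfl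
  · rintro ⟨hW, h⟩
    refine ⟨hW, fun k hk => ?_⟩
    exact (key hW k hk).1.2 (fun i hi => h i (by omega)) k le_rfl
end

section
/- The subsets {Q ∈ 𝒬 : Q satisfies HL} and {Q ∈ 𝒬 : Q satisfies HR} are open in 𝒬; moreover {Q ∈ 𝒬 : Q satisfies HR} is a closed subset of the topological subspace {Q ∈ 𝒬 : Q satisfies HL}. -/
open Module

namespace S5

variable {V : Type} [AddCommGroup V] [Module ℝ V]

/-- The truncation `⨁_{0 ≤ k ≤ d/2} A^k`, as a subspace of the ambient space. -/
def W (d : ℕ) (A : ℤ → Submodule ℝ V) : Submodule ℝ V :=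
  ⨆ (k : ℕ) (_ : 2 * k ≤ d), A (k : ℤ)

/-- `B` belongs to the space `𝒬`: it is a bilinear, symmetric form on
`V = ⨁_{0 ≤ k ≤ d/2} A^k` for which distinct graded pieces are orthogonal. -/
def IsAdmissible (d : ℕ) (A : ℤ → Submodule ℝ V)
    (B : ↥(W d A) → ↥(W d A) → ℝ) : Prop :=
  (∀ x x' y, B (x + x') y = B x y + B x' y) ∧
  (∀ (c : ℝ) (x y), B (c • x) y = c * B x y) ∧
  (∀ x y y', B x (y + y') = B x y + B x y') ∧
  (∀ (c : ℝ) (x y), B x (c • y) = c * B x y) ∧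
  (∀ x y, B x y = B y x) ∧
  (∀ i j : ℕ, 2 * i ≤ d → 2 * j ≤ d → i ≠ j →
    ∀ x y : ↥(W d A), (x : V) ∈ A (i : ℤ) → (y : V) ∈ A (j : ℤ) → B x y = 0)

/-- The space `𝒬` of admissible bilinear forms, topologized (as a finite-dimensional real
vector space) by pointwise convergence. -/
abbrev QSpace (d : ℕ) (A : ℤ → Submodule ℝ V) : Type :=
  {B : ↥(W d A) → ↥(W d A) → ℝ // IsAdmissible d A B}

/-- `Q` satisfies `HL`: it is non-degenerate. -/
def HLpred (d : ℕ) (A : ℤ → Submodule ℝ V) (B : ↥(W d A) → ↥(W d A) → ℝ) : Prop :=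
  ∀ x : ↥(W d A), (∀ y : ↥(W d A), B x y = 0) → x = 0

/-- The maximal dimension of a subspace of `S` on which the form `B` is positive definite. -/
noncomputable def maxPosDim {M : Type} [AddCommGroup M] [Module ℝ M]
    (B : M → M → ℝ) (S : Submodule ℝ M) : ℕ :=
  sSup {m : ℕ | ∃ T : Submodule ℝ M, T ≤ S ∧ finrank ℝ T = m ∧ ∀ x ∈ T, x ≠ 0 → 0 < B x x}

/-- The maximal dimension of a subspace of `S` on which the form `B` is negative definite. -/
noncomputable def maxNegDim {M : Type} [AddCommGroup M] [Module ℝ M]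
    (B : M → M → ℝ) (S : Submodule ℝ M) : ℕ :=
  sSup {m : ℕ | ∃ T : Submodule ℝ M, T ≤ S ∧ finrank ℝ T = m ∧ ∀ x ∈ T, x ≠ 0 → B x x < 0}

/-- The signature of the restriction of the form `B` to `S`. -/
noncomputable def signature {M : Type} [AddCommGroup M] [Module ℝ M]
    (B : M → M → ℝ) (S : Submodule ℝ M) : ℤ :=
  (maxPosDim B S : ℤ) - (maxNegDim B S : ℤ)

/-- `Q` satisfies `HR`: it is non-degenerate and, for each `0 ≤ k ≤ d/2`, the signature of its
restriction to `A^k` equals `∑_{i=0}^k (-1)^i (dim A^i - dim A^{i-1})`. -/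
def HRpred (d : ℕ) (A : ℤ → Submodule ℝ V) (B : ↥(W d A) → ↥(W d A) → ℝ) : Prop :=
  HLpred d A B ∧ ∀ k : ℕ, 2 * k ≤ d →
    signature B ((A (k : ℤ)).comap (W d A).subtype) =
      ∑ i ∈ Finset.range (k + 1),
        (-1 : ℤ) ^ i * ((finrank ℝ (A (i : ℤ)) : ℤ) - (finrank ℝ (A ((i : ℤ) - 1)) : ℤ))

end S5

namespace S5

open LinearMap (BilinForm)

variable {M : Type} [AddCommGroup M] [Module ℝ M] [FiniteDimensional ℝ M]

/-- Positive definiteness on a fixed subspace is an open condition. -/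
lemma isOpen_pos {X : Type} [TopologicalSpace X] (F : X → BilinForm ℝ M)
    (hF : ∀ x y, Continuous fun q => F q x y) (T : Submodule ℝ M) :
    IsOpen {q | ∀ x ∈ T, x ≠ 0 → 0 < F q x x} := by
  let b := Module.finBasis ℝ T
  let e : (Fin (finrank ℝ T) → ℝ) → M := fun c => ((b.equivFun.symm c : T) : M)
  have hcont : Continuous fun p : X × (Fin (finrank ℝ T) → ℝ) => F p.1 (e p.2) (e p.2) := by
    have : ∀ p : X × (Fin (finrank ℝ T) → ℝ), F p.1 (e p.2) (e p.2) =
        ∑ i, ∑ j, p.2 i * (p.2 j * F p.1 (b j) (b i)) := by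
      intro p
      simp [e, Module.Basis.equivFun_symm_apply, Finset.mul_sum]
    simp_rw [this]
    refine continuous_finsetSum _ fun i _ => continuous_finsetSum _ fun j _ => ?_
    have := (hF (b j) (b i)).comp (continuous_fst (X := X) (Y := Fin (finrank ℝ T) → ℝ))
    have h2 : Continuous fun p : X × (Fin (finrank ℝ T) → ℝ) => p.2 i := by fun_prop
    have h3 : Continuous fun p : X × (Fin (finrank ℝ T) → ℝ) => p.2 j := by fun_prop
    exact h2.mul (h3.mul this)
  have hset : {q | ∀ x ∈ T, x ≠ 0 → 0 < F q x x} =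
      {q | ∀ c ∈ Metric.sphere (0 : Fin (finrank ℝ T) → ℝ) 1, 0 < F q (e c) (e c)} := by
    ext q
    constructor
    · intro h c hc
      apply h _ (Subtype.mem _)
      intro h0
      have h1 : b.equivFun.symm c = 0 := Subtype.ext h0
      have h2 : c = 0 := b.equivFun.symm.map_eq_zero_iff.mp h1
      subst h2
      simp at hc
    · intro h x hx hx0
      let c := b.equivFun ⟨x, hx⟩
      have hec : e c = x := by
        simp only [e, c, LinearEquiv.symm_apply_apply]
      have hc0 : c ≠ 0 := by
        intro h0
        apply hx0
        rw [← hec, h0]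
        simp [e]
      have hn : 0 < ‖c‖ := norm_pos_iff.mpr hc0
      have := h (‖c‖⁻¹ • c) (by simp [norm_smul, hn.ne'])
      have he : e (‖c‖⁻¹ • c) = ‖c‖⁻¹ • x := by
        rw [← hec]; simp only [e, map_smul, Submodule.coe_smul]
      rw [he] at this
      simp only [map_smul, LinearMap.smul_apply, smul_eq_mul] at this
      have hi : 0 < ‖c‖⁻¹ := inv_pos.mpr hn
      exact pos_of_mul_pos_right (pos_of_mul_pos_right this hi.le) hi.le
  rw [hset, isOpen_iff_eventually]
  intro q hq
  refine (isCompact_sphere _ _).eventually_forall_of_forall_eventually fun c hc => ?_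
  exact (hcont.tendsto (q, c)).eventually (lt_mem_nhds (hq c hc))

lemma isOpen_neg {X : Type} [TopologicalSpace X] (F : X → BilinForm ℝ M)
    (hF : ∀ x y, Continuous fun q => F q x y) (T : Submodule ℝ M) :
    IsOpen {q | ∀ x ∈ T, x ≠ 0 → F q x x < 0} := by
  have := isOpen_pos (fun q => -F q) (fun x y => (hF x y).neg) T
  simpa using this

/-- Definiteness on the span of part of an orthogonal basis. -/
lemma pos_span {N : Type} [AddCommGroup N] [Module ℝ N] (C : BilinForm ℝ N) {n : ℕ}
    (v : Basis (Fin n) ℝ N) (hv : C.IsOrthoᵢ v) (s : Set (Fin n))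
    (hs : ∀ i ∈ s, 0 < C (v i) (v i)) :
    ∀ x ∈ Submodule.span ℝ (v '' s), x ≠ 0 → 0 < C x x := by
  intro x hx hx0
  have hsupp : ∀ i, i ∉ s → v.repr x i = 0 := by
    intro i hi
    by_contra hne
    rw [Module.Basis.mem_span_image] at hx
    exact hi (hx (by simpa using hne))
  have hsum : C x x = ∑ i, v.repr x i * (v.repr x i * C (v i) (v i)) := by
    conv_lhs => rw [← v.sum_repr x]
    simp only [map_sum, map_smul, LinearMap.sum_apply, LinearMap.smul_apply, smul_eq_mul]
    refine Finset.sum_congr rfl fun i _ => ?_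
    rw [Finset.sum_eq_single i]
    · intro j _ hj
      have : C (v j) (v i) = 0 := hv hj
      rw [this]; simp
    · simp
  rw [hsum]
  have hnn : ∀ i ∈ Finset.univ, 0 ≤ v.repr x i * (v.repr x i * C (v i) (v i)) := by
    intro i _
    by_cases hi : i ∈ s
    · have := hs i hi
      rw [← mul_assoc]
      exact mul_nonneg (mul_self_nonneg _) this.le
    · simp [hsupp i hi]
  refine Finset.sum_pos' hnn ?_
  by_contra! hcon
  apply hx0
  apply v.repr.injective
  ext i
  by_cases hi : i ∈ s
  · by_contra hne
    have h1 := hcon i (Finset.mem_univ i)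
    rw [← mul_assoc] at h1
    have : v.repr x i ≠ 0 := by simpa using hne
    have := mul_pos (mul_self_pos.mpr this) (hs i hi)
    linarith
  · simpa using hsupp i hi

/-- Sylvester decomposition. -/
lemma exists_split (C : BilinForm ℝ M) (hC : ∀ x y, C x y = C y x) (S : Submodule ℝ M)
    (hS : ∀ x ∈ S, (∀ y ∈ S, C x y = 0) → x = 0) :
    ∃ P N : Submodule ℝ M, P ≤ S ∧ N ≤ S ∧ finrank ℝ P + finrank ℝ N = finrank ℝ S ∧
      (∀ x ∈ P, x ≠ 0 → 0 < C x x) ∧ (∀ x ∈ N, x ≠ 0 → C x x < 0) := by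
  classical
  let D : BilinForm ℝ S := C.restrict S
  have hD : ∀ x y : S, D x y = C x y := fun _ _ => rfl
  have hsym : LinearMap.IsSymm D := ⟨fun x y => hC x y⟩
  obtain ⟨v, hv⟩ := LinearMap.BilinForm.exists_orthogonal_basis hsym
  have hne : ∀ i, D (v i) (v i) ≠ 0 := by
    intro i h0
    have hz : ∀ y, D (v i) y = 0 := by
      intro y
      have : D (v i) = 0 := by
        apply v.ext
        intro j
        by_cases hij : i = j
        · subst hij; simpa using h0
        · exact hv hij
      rw [this]; rfl
    have : (v i : M) = 0 := hS _ (v i).2 fun y hy => hz ⟨y, hy⟩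
    exact v.ne_zero i (Subtype.ext this)
  let s : Set (Fin (finrank ℝ S)) := {i | 0 < D (v i) (v i)}
  have hfr : ∀ t : Set (Fin (finrank ℝ S)),
      finrank ℝ ((Submodule.span ℝ (v '' t)).map S.subtype) = Fintype.card t := by
    intro t
    rw [(Submodule.equivMapOfInjective _ S.injective_subtype _).finrank_eq.symm,
      ← Set.range_domRestrict v t]
    exact finrank_span_eq_card (v.linearIndependent.comp _ Subtype.val_injective)
  refine ⟨(Submodule.span ℝ (v '' s)).map S.subtype, (Submodule.span ℝ (v '' sᶜ)).map S.subtype,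
    Submodule.map_subtype_le _ _, Submodule.map_subtype_le _ _, ?_, ?_, ?_⟩
  · rw [hfr, hfr, Fintype.card_compl_set, Fintype.card_fin]
    have := Fintype.card_subtype_le (· ∈ s)
    simp only [Fintype.card_fin] at this
    have h2 : Fintype.card s ≤ finrank ℝ S := this
    omega
  · rintro _ ⟨x, hx, rfl⟩ hx0
    exact pos_span D v hv s (fun i hi => hi) x hx (by rintro rfl; simp at hx0)
  · rintro _ ⟨x, hx, rfl⟩ hx0
    have := pos_span (-D) v (fun i j hij => by
      have : D (v i) (v j) = 0 := hv hij
      simpa using this) sᶜ (fun i hi => by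
        have h1 : ¬ 0 < D (v i) (v i) := hi
        have := lt_of_le_of_ne (not_lt.mp h1) (hne i)
        simpa using this) x hx (by rintro rfl; simp at hx0)
    have h3 : 0 < - D x x := this
    exact neg_pos.mp h3

lemma sSup_dim (S P N : Submodule ℝ M) (hP : P ≤ S) (hN : N ≤ S)
    (hd : finrank ℝ P + finrank ℝ N = finrank ℝ S) (p : M → Prop)
    (h1 : ∀ x ∈ P, x ≠ 0 → p x) (h2 : ∀ x ∈ N, x ≠ 0 → ¬ p x) :
    sSup {m : ℕ | ∃ T : Submodule ℝ M, T ≤ S ∧ finrank ℝ T = m ∧ ∀ x ∈ T, x ≠ 0 → p x} =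
      finrank ℝ P := by
  apply IsGreatest.csSup_eq
  refine ⟨⟨P, hP, rfl, h1⟩, ?_⟩
  rintro m ⟨T, hT, rfl, hp⟩
  have hdis : T ⊓ N = ⊥ := by
    rw [eq_bot_iff]
    rintro x ⟨hx, hx'⟩
    by_contra h0
    exact h2 x hx' h0 (hp x hx h0)
  have h3 := Submodule.finrank_sup_add_finrank_inf_eq T N
  rw [hdis, finrank_bot] at h3
  have h4 := Submodule.finrank_mono (sup_le hT hN)
  omega

lemma signature_eq (C : M → M → ℝ) (S P N : Submodule ℝ M) (hP : P ≤ S) (hN : N ≤ S)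
    (hd : finrank ℝ P + finrank ℝ N = finrank ℝ S)
    (h1 : ∀ x ∈ P, x ≠ 0 → 0 < C x x) (h2 : ∀ x ∈ N, x ≠ 0 → C x x < 0) :
    signature C S = (finrank ℝ P : ℤ) - finrank ℝ N := by
  unfold signature maxPosDim maxNegDim
  rw [sSup_dim S P N hP hN hd (fun x => 0 < C x x) h1 (fun x hx h0 => (h2 x hx h0).not_gt),
    sSup_dim S N P hN hP (by omega) (fun x => C x x < 0) h2 (fun x hx h0 => (h1 x hx h0).not_gt)]

lemma nondeg_of_split (C : BilinForm ℝ M) (hC : ∀ x y, C x y = C y x) (P N : Submodule ℝ M)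
    (hd : finrank ℝ P + finrank ℝ N = finrank ℝ M)
    (h1 : ∀ x ∈ P, x ≠ 0 → 0 < C x x) (h2 : ∀ x ∈ N, x ≠ 0 → C x x < 0)
    (x : M) (hx : ∀ y, C x y = 0) : x = 0 := by
  have hdis : P ⊓ N = ⊥ := by
    rw [eq_bot_iff]
    rintro x ⟨hx, hx'⟩
    by_contra h0
    exact (h1 x hx h0).not_gt (h2 x hx' h0)
  have htop : P ⊔ N = ⊤ := by
    apply Submodule.eq_top_of_finrank_eq
    have h3 := Submodule.finrank_sup_add_finrank_inf_eq P N
    rw [hdis, finrank_bot] at h3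
    omega
  have hm : x ∈ P ⊔ N := htop ▸ Submodule.mem_top
  obtain ⟨a, ha, b, hb, rfl⟩ := Submodule.mem_sup.mp hm
  have e1 := hx a
  have e2 := hx b
  simp only [map_add, LinearMap.add_apply] at e1 e2
  have e3 := hC a b
  have ha0 : a = 0 := by
    by_contra h0
    have := h1 a ha h0
    by_cases hb0 : b = 0
    · subst hb0; simp at e1; linarith
    · have := h2 b hb hb0; linarith
  have hb0 : b = 0 := by
    by_contra h0
    have := h2 b hb h0
    subst ha0; simp at e2; linarith
  simp [ha0, hb0]

/-- The bilinear form underlying an admissible function. -/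
noncomputable def toForm {V : Type} [AddCommGroup V] [Module ℝ V] (d : ℕ) (A : ℤ → Submodule ℝ V)
    (B : QSpace d A) : BilinForm ℝ (W d A) :=
  LinearMap.mk₂ ℝ B.1 B.2.1 B.2.2.1 B.2.2.2.1 B.2.2.2.2.1

lemma eventually_same {V : Type} [AddCommGroup V] [Module ℝ V] [FiniteDimensional ℝ V]
    (d : ℕ) (A : ℤ → Submodule ℝ V) (B : QSpace d A) (hB : HLpred d A B.1) :
    ∀ᶠ C in nhds B, HLpred d A C.1 ∧ ∀ k : ℕ, 2 * k ≤ d →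
      signature C.1 ((A (k : ℤ)).comap (W d A).subtype) =
      signature B.1 ((A (k : ℤ)).comap (W d A).subtype) := by
  have hcont : ∀ x y, Continuous fun q => toForm d A q x y := by
    intro x y
    have h : Continuous fun q : QSpace d A => q.1 x y :=
      (continuous_apply y).comp ((continuous_apply x).comp continuous_subtype_val)
    exact h
  have hsym : ∀ q x y, toForm d A q x y = toForm d A q y x := fun q => q.2.2.2.2.2.1
  have key : ∀ S : Submodule ℝ (W d A),
      (∀ x ∈ S, (∀ y ∈ S, toForm d A B x y = 0) → x = 0) →
      ∃ P N : Submodule ℝ (W d A), P ≤ S ∧ N ≤ S ∧ finrank ℝ P + finrank ℝ N = finrank ℝ S ∧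
      ∀ᶠ C in nhds B, (∀ x ∈ P, x ≠ 0 → 0 < toForm d A C x x) ∧
        (∀ x ∈ N, x ≠ 0 → toForm d A C x x < 0) := by
    intro S hS
    obtain ⟨P, N, hP, hN, hd, h1, h2⟩ := exists_split _ (hsym B) S hS
    exact ⟨P, N, hP, hN, hd, Filter.Eventually.and ((isOpen_pos _ hcont P).mem_nhds h1)
      ((isOpen_neg _ hcont N).mem_nhds h2)⟩
  refine Filter.Eventually.and ?_ ?_
  · obtain ⟨P, N, -, -, hd, he⟩ := key ⊤ (fun x _ h => hB x fun y => h y trivial)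
    rw [finrank_top] at hd
    filter_upwards [he] with C hC
    exact nondeg_of_split _ (hsym C) P N hd hC.1 hC.2
  · have : ∀ k ∈ Finset.range (d + 1), ∀ᶠ C : QSpace d A in nhds B, 2 * k ≤ d →
        signature C.1 ((A (k : ℤ)).comap (W d A).subtype) =
        signature B.1 ((A (k : ℤ)).comap (W d A).subtype) := by
      intro k _
      by_cases hk : 2 * k ≤ d
      swap
      · exact Filter.Eventually.of_forall fun C h => absurd h hk
      obtain ⟨P, N, hP, hN, hd, he⟩ := key ((A (k : ℤ)).comap (W d A).subtype) (by
        intro x hx h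
        apply hB x
        have hle : W d A ≤ (LinearMap.ker (toForm d A B x)).map (W d A).subtype := by
          refine iSup₂_le fun j hj a ha => ?_
          have haW : a ∈ W d A :=
            (le_iSup₂_of_le (f := fun (k : ℕ) (_ : 2 * k ≤ d) => A (k : ℤ)) j hj le_rfl) ha
          refine ⟨⟨a, haW⟩, ?_, rfl⟩
          by_cases hjk : k = j
          · subst hjk
            exact h ⟨a, haW⟩ ha
          · exact B.2.2.2.2.2.2 k j hk hj hjk x ⟨a, haW⟩ hx ha
        intro y
        obtain ⟨z, hz, hzy⟩ := hle y.2
        have : z = y := Subtype.ext hzy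
        subst this
        exact hz)
      have hs := signature_eq B.1 _ P N hP hN hd he.self_of_nhds.1 he.self_of_nhds.2
      filter_upwards [he] with C hC _
      rw [hs]
      exact signature_eq C.1 _ P N hP hN hd hC.1 hC.2
    have h2 := (Filter.eventually_all_finset (Finset.range (d + 1))).mpr this
    filter_upwards [h2] with C hC k hk
    exact hC k (by simp; omega) hk

end S5

open S5 in
/-- the subsets of `𝒬` of forms satisfying `HL`, resp. `HR`, are open in `𝒬`;
moreover the subset of forms satisfying `HR` is closed in the subspace of forms satisfying
`HL`. -/
theorem statement5
    {V : Type} [AddCommGroup V] [Module ℝ V] [FiniteDimensional ℝ V]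
    (d : ℕ) (A : ℤ → Submodule ℝ V)
    (hA : DirectSum.IsInternal A)
    (hAneg : ∀ k : ℤ, k < 0 → A k = ⊥)
    (hWPD : ∀ k : ℤ, finrank ℝ (A k) = finrank ℝ (A (d - k))) :
    IsOpen {B : QSpace d A | HLpred d A B.1} ∧
    IsOpen {B : QSpace d A | HRpred d A B.1} ∧
    IsClosed (Subtype.val ⁻¹' {B : QSpace d A | HRpred d A B.1} :
      Set {B : QSpace d A // HLpred d A B.1}) := by
  have key := eventually_same d A
  refine ⟨?_, ?_, ?_⟩
  · rw [isOpen_iff_eventually]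
    intro B hB
    filter_upwards [key B hB] with C hC using hC.1
  · rw [isOpen_iff_eventually]
    intro B hB
    filter_upwards [key B hB.1] with C hC
    exact ⟨hC.1, fun k hk => (hC.2 k hk).trans (hB.2 k hk)⟩
  · rw [← isOpen_compl_iff, isOpen_iff_eventually]
    intro B hB
    filter_upwards [continuous_subtype_val.continuousAt.eventually (key B.1 B.2)] with C hC hCR
    exact hB ⟨B.2, fun k hk => (hC.2 k hk).symm.trans (hCR.2 k hk)⟩
end

section
/- (Zigzag lemma) Let A^{•,•} be a first-quadrant double complex such that the column (A^{b,•}, d') is exact for every b > 0 and the row (A^{•,b'}, d) is exact for every b' > 0. Then for every k there is a canonical isomorphism H^k(A^{0,•}, d') ≅ H^k(A^{•,0}, d). Moreover this isomorphism is natural: if B^{•,•} is another double complex satisfying the same hypotheses and Φ : A^{•,•} → B^{•,•} is a morphism of double complexes (commuting, or anticommuting, with both differentials), then the square formed by the maps induced by Φ on H^k(A^{0,•}), H^k(A^{•,0}), H^k(B^{0,•}), H^k(B^{•,0}) and the canonical isomorphisms commutes. -/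
namespace S10

/-- A first-quadrant double complex of vector spaces over `K`, presented inside an ambient
vector space `V` which is the (internal) direct sum of the bigraded pieces `X b b'`, with
anticommuting differentials `d` of bidegree `(1,0)` and `d'` of bidegree `(0,1)`. -/
structure DC (K : Type) [Field K] where
  V : Type
  [acg : AddCommGroup V]
  [mod : Module K V]
  X : ℤ → ℤ → Submodule K V
  internal : DirectSum.IsInternal (fun p : ℤ × ℤ => X p.1 p.2)
  vanish : ∀ b b' : ℤ, b < 0 ∨ b' < 0 → X b b' = ⊥
  d : V →ₗ[K] V
  d' : V →ₗ[K] V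
  d_mem : ∀ b b' : ℤ, ∀ x ∈ X b b', d x ∈ X (b + 1) b'
  d'_mem : ∀ b b' : ℤ, ∀ x ∈ X b b', d' x ∈ X b (b' + 1)
  dd : ∀ x, d (d x) = 0
  d'd' : ∀ x, d' (d' x) = 0
  anticomm : ∀ x, d (d' x) + d' (d x) = 0

attribute [instance] DC.acg DC.mod

variable {K : Type} [Field K]

/-- cocycles of the `0`-th column, in degree `k` -/
def Zcol (A : DC K) (k : ℤ) : Submodule K A.V := A.X 0 k ⊓ LinearMap.ker A.d'

/-- coboundaries of the `0`-th column, in degree `k` -/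
def Bcol (A : DC K) (k : ℤ) : Submodule K A.V := Submodule.map A.d' (A.X 0 (k - 1))

/-- cocycles of the `0`-th row, in degree `k` -/
def Zrow (A : DC K) (k : ℤ) : Submodule K A.V := A.X k 0 ⊓ LinearMap.ker A.d

/-- coboundaries of the `0`-th row, in degree `k` -/
def Brow (A : DC K) (k : ℤ) : Submodule K A.V := Submodule.map A.d (A.X (k - 1) 0)

/-- `H^k(A^{0,•}, d')` -/
abbrev Hcol (A : DC K) (k : ℤ) : Type :=
  ↥(Zcol A k) ⧸ (Bcol A k).comap (Zcol A k).subtype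

/-- `H^k(A^{•,0}, d)` -/
abbrev Hrow (A : DC K) (k : ℤ) : Type :=
  ↥(Zrow A k) ⧸ (Brow A k).comap (Zrow A k).subtype

/-- The column `(A^{b,•}, d')` is exact for every `b > 0`, and the row `(A^{•,b'}, d)` is
exact for every `b' > 0`. -/
def ColsRowsExact (A : DC K) : Prop :=
  (∀ b : ℤ, 0 < b → ∀ b' : ℤ, ∀ x ∈ A.X b b', A.d' x = 0 →
    ∃ y ∈ A.X b (b' - 1), A.d' y = x) ∧
  (∀ b' : ℤ, 0 < b' → ∀ b : ℤ, ∀ x ∈ A.X b b', A.d x = 0 →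
    ∃ y ∈ A.X (b - 1) b', A.d y = x)

/-- A morphism of double complexes, commuting (or anticommuting) with both differentials. -/
def IsHom (A B : DC K) (Φ : A.V →ₗ[K] B.V) : Prop :=
  (∀ b b' : ℤ, ∀ x ∈ A.X b b', Φ x ∈ B.X b b') ∧
  (((∀ x, Φ (A.d x) = B.d (Φ x)) ∧ (∀ x, Φ (A.d' x) = B.d' (Φ x))) ∨
   ((∀ x, Φ (A.d x) = - B.d (Φ x)) ∧ (∀ x, Φ (A.d' x) = - B.d' (Φ x))))

end S10

namespace S10

/-- The data of a double complex with exact positive columns, in a form stable under transposition. -/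
structure Raw {K V : Type} [Field K] [AddCommGroup V] [Module K V]
    (X : ℤ → ℤ → Submodule K V) (d d' : V →ₗ[K] V) : Prop where
  vanish : ∀ b b' : ℤ, b < 0 ∨ b' < 0 → X b b' = ⊥
  d_mem : ∀ b b' : ℤ, ∀ x ∈ X b b', d x ∈ X (b + 1) b'
  dd : ∀ x, d (d x) = 0
  anticomm : ∀ x, d (d' x) + d' (d x) = 0
  ex : ∀ b : ℤ, 0 < b → ∀ b' : ℤ, ∀ x ∈ X b b', d' x = 0 → ∃ y ∈ X b (b' - 1), d' y = x

/-- `w` is a cocycle of total degree `k`. -/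
def IsTot {K V : Type} [Field K] [AddCommGroup V] [Module K V]
    (X : ℤ → ℤ → Submodule K V) (d d' : V →ₗ[K] V) (k : ℤ) (w : ℤ → V) : Prop :=
  (∀ i, w i ∈ X i (k - i)) ∧ ∀ i, d (w i) + d' (w (i + 1)) = 0

/-- `w` is a coboundary of total degree `k`. -/
def IsBd {K V : Type} [Field K] [AddCommGroup V] [Module K V]
    (X : ℤ → ℤ → Submodule K V) (d d' : V →ₗ[K] V) (k : ℤ) (w : ℤ → V) : Prop :=
  ∃ u : ℤ → V, (∀ i, u i ∈ X i (k - 1 - i)) ∧ ∀ i, d (u (i - 1)) + d' (u i) = w i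

theorem mem_cast {K V : Type} [Field K] [AddCommGroup V] [Module K V]
    {X : ℤ → ℤ → Submodule K V} {a b a' b' : ℤ} {x : V} (h : x ∈ X a b)
    (ha : a = a') (hb : b = b') : x ∈ X a' b' := by
  subst ha; subst hb; exact h

theorem exists_seq {V : Type} (P : ℕ → V → Prop) (R : ℕ → V → V → Prop) (x : V) (hx : P 0 x)
    (step : ∀ n v, P n v → ∃ v', P (n + 1) v' ∧ R n v v') :
    ∃ u : ℕ → V, u 0 = x ∧ (∀ n, P n (u n)) ∧ ∀ n, R n (u n) (u (n + 1)) := by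
  choose f hf using step
  let s : ∀ n : ℕ, {v // P n v} := fun n =>
    Nat.rec ⟨x, hx⟩ (fun n v => ⟨f n v.1 v.2, (hf n v.1 v.2).1⟩) n
  exact ⟨fun n => (s n).1, rfl, fun n => (s n).2, fun n => (hf n (s n).1 (s n).2).2⟩

section
variable {K V : Type} [Field K] [AddCommGroup V] [Module K V]
    {X : ℤ → ℤ → Submodule K V} {d d' : V →ₗ[K] V}

theorem Raw.zero (h : Raw X d d') {b b' : ℤ} (hb : b < 0 ∨ b' < 0) {x : V} (hx : x ∈ X b b') :
    x = 0 := by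
  rw [h.vanish b b' hb] at hx
  simpa using hx

theorem Raw.exists_tot (h : Raw X d d') (k : ℤ) (x : V) (hx : x ∈ X 0 k) (hx' : d' x = 0) :
    ∃ w, IsTot X d d' k w ∧ w 0 = x := by
  obtain ⟨u, hu0, hP, hR⟩ := exists_seq
    (fun (n : ℕ) v => v ∈ X n (k - n) ∧ d' (d v) = 0)
    (fun _ v v' => d v + d' v' = 0) x
    ⟨mem_cast hx (by simp) (by simp), by
      have := h.anticomm x
      simpa [hx'] using this⟩
    (by
      rintro n v ⟨hv, hv'⟩
      obtain ⟨y, hy, hyd⟩ := h.ex (n + 1) (by omega) _ _ (h.d_mem _ _ _ hv) hv'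
      refine ⟨-y, ⟨neg_mem (mem_cast hy (by push_cast; ring) (by push_cast; ring)), ?_⟩, ?_⟩
      · have := h.anticomm y
        rw [hyd, h.dd, zero_add] at this
        simp [this]
      · simp [hyd])
  refine ⟨fun i => if 0 ≤ i then u i.toNat else 0, ⟨fun i => ?_, fun i => ?_⟩, by simp [hu0]⟩
  · by_cases hi : 0 ≤ i
    · simp only [hi, if_true]
      exact mem_cast (hP i.toNat).1 (by omega) (by omega)
    · simp [hi]
  · rcases lt_trichotomy i (-1) with hi | hi | hi
    · simp [show ¬ 0 ≤ i by omega, show ¬ 0 ≤ i + 1 by omega]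
    · subst hi
      simp [hu0, hx']
    · simp only [show 0 ≤ i by omega, show 0 ≤ i + 1 by omega, if_true]
      have := hR i.toNat
      rwa [show (i + 1).toNat = i.toNat + 1 by omega]

theorem Raw.bd_of (h : Raw X d d') (k : ℤ) (w : ℤ → V) (hw : IsTot X d d' k w)
    (v : V) (hv : v ∈ X 0 (k - 1)) (hvw : d' v = w 0) : IsBd X d d' k w := by
  obtain ⟨u, hu0, hP, hR⟩ := exists_seq
    (fun (n : ℕ) v => v ∈ X n (k - 1 - n) ∧ d' (w (n + 1) - d v) = 0)
    (fun n v v' => d v + d' v' = w (n + 1)) v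
    ⟨mem_cast hv (by simp) (by simp), by
      have h1 := h.anticomm v
      have h2 := hw.2 0
      rw [hvw] at h1
      simp only [Nat.cast_zero, map_sub]
      rw [eq_neg_of_add_eq_zero_right h1, eq_neg_of_add_eq_zero_right h2, sub_self]⟩
    (by
      rintro n v ⟨hv, hv'⟩
      have hm : w (n + 1) - d v ∈ X (n + 1) (k - (n + 1)) :=
        sub_mem (hw.1 _) (mem_cast (h.d_mem _ _ _ hv) rfl (by ring))
      obtain ⟨y, hy, hyd⟩ := h.ex (n + 1) (by omega) _ _ hm hv'
      refine ⟨y, ⟨mem_cast hy (by push_cast; ring) (by push_cast; ring), ?_⟩, ?_⟩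
      · have h1 := h.anticomm y
        have h2 := hw.2 (n + 1)
        rw [hyd, map_sub, h.dd, sub_zero] at h1
        push_cast
        rw [map_sub, eq_neg_of_add_eq_zero_right h1, eq_neg_of_add_eq_zero_right h2, sub_self]
      · simp [hyd])
  refine ⟨fun i => if 0 ≤ i then u i.toNat else 0, fun i => ?_, fun i => ?_⟩
  · by_cases hi : 0 ≤ i
    · simp only [hi, if_true]
      exact mem_cast (hP i.toNat).1 (by omega) (by omega)
    · simp [hi]
  · rcases lt_trichotomy i 0 with hi | hi | hi
    · simp only [show ¬ 0 ≤ i by omega, show ¬ 0 ≤ i - 1 by omega, if_false]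
      simp [h.zero (Or.inl hi) (hw.1 i)]
    · subst hi
      simp [hu0, hvw]
    · simp only [show 0 ≤ i by omega, show 0 ≤ i - 1 by omega, if_true]
      have := hR (i - 1).toNat
      rw [show (i - 1).toNat + 1 = i.toNat by omega,
        show (((i - 1).toNat : ℤ) + 1) = i by omega] at this
      exact this

theorem Raw.of_bd (h : Raw X d d') (k : ℤ) (w : ℤ → V) (hb : IsBd X d d' k w) :
    ∃ v ∈ X 0 (k - 1), d' v = w 0 := by
  obtain ⟨u, hu, he⟩ := hb
  refine ⟨u 0, mem_cast (hu 0) rfl (by ring), ?_⟩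
  have := he 0
  rwa [h.zero (Or.inl (by omega)) (hu (0 - 1)), map_zero, zero_add] at this

theorem Raw.cocycle (h : Raw X d d') (k : ℤ) (w : ℤ → V) (hw : IsTot X d d' k w) :
    w 0 ∈ X 0 k ∧ d' (w 0) = 0 := by
  refine ⟨mem_cast (hw.1 0) rfl (by ring), ?_⟩
  have := hw.2 (-1)
  rw [h.zero (Or.inl (by omega)) (hw.1 (-1)), map_zero, zero_add] at this
  simpa using this

theorem IsTot.flip {k : ℤ} {w : ℤ → V} (hw : IsTot X d d' k w) :
    IsTot (fun a b => X b a) d' d k (fun i => w (k - i)) := by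
  refine ⟨fun i => mem_cast (hw.1 (k - i)) rfl (by ring), fun i => ?_⟩
  have := hw.2 (k - (i + 1))
  rw [show k - (i + 1) + 1 = k - i by ring] at this
  rw [add_comm]; exact this

theorem IsBd.flip {k : ℤ} {w : ℤ → V} (hw : IsBd X d d' k w) :
    IsBd (fun a b => X b a) d' d k (fun i => w (k - i)) := by
  obtain ⟨u, hu, he⟩ := hw
  refine ⟨fun i => u (k - 1 - i), fun i => mem_cast (hu _) rfl (by ring), fun i => ?_⟩
  have := he (k - i)
  rw [show k - i - 1 = k - 1 - i by ring] at this
  rw [add_comm]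
  simp only [show k - 1 - (i - 1) = k - i by ring]
  exact this

end

section
variable {K : Type} [Field K]

theorem raw1 (A : DC K) (h : ColsRowsExact A) : Raw A.X A.d A.d' :=
  ⟨A.vanish, A.d_mem, A.dd, A.anticomm, h.1⟩

theorem raw2 (A : DC K) (h : ColsRowsExact A) : Raw (fun a b => A.X b a) A.d' A.d :=
  ⟨fun b b' hb => A.vanish b' b hb.symm, fun b b' => A.d'_mem b' b, A.d'd',
    fun x => by rw [add_comm]; exact A.anticomm x, h.2⟩

/-- Total cocycles of degree `k`. -/
def T (A : DC K) (k : ℤ) : Submodule K (ℤ → A.V) where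
  carrier := {w | IsTot A.X A.d A.d' k w}
  zero_mem' := ⟨fun i => zero_mem _, fun i => by simp⟩
  add_mem' := by
    rintro a b ha hb
    refine ⟨fun i => add_mem (ha.1 i) (hb.1 i), fun i => ?_⟩
    have h1 := ha.2 i
    have h2 := hb.2 i
    simp only [Pi.add_apply, map_add]
    rw [add_add_add_comm, h1, h2, add_zero]
  smul_mem' := by
    rintro c a ha
    refine ⟨fun i => Submodule.smul_mem _ c (ha.1 i), fun i => ?_⟩
    simp only [Pi.smul_apply, map_smul]
    rw [← smul_add, ha.2 i, smul_zero]

theorem mem_row (A : DC K) (h : ColsRowsExact A) (k : ℤ) (w : ℤ → A.V)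
    (hw : IsTot A.X A.d A.d' k w) : w k ∈ A.X k 0 ∧ A.d (w k) = 0 := by
  simpa using (raw2 A h).cocycle k _ hw.flip

/-- Projection to the zeroth column. -/
def toZcol (A : DC K) (h : ColsRowsExact A) (k : ℤ) : T A k →ₗ[K] Zcol A k :=
  LinearMap.codRestrict (Zcol A k) ((LinearMap.proj 0).comp (T A k).subtype)
    (fun w => (raw1 A h).cocycle k w.1 w.2)

/-- Projection to the zeroth row. -/
def toZrow (A : DC K) (h : ColsRowsExact A) (k : ℤ) : T A k →ₗ[K] Zrow A k :=
  LinearMap.codRestrict (Zrow A k) ((LinearMap.proj k).comp (T A k).subtype)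
    (fun w => mem_row A h k w.1 w.2)

theorem toZcol_surj (A : DC K) (h : ColsRowsExact A) (k : ℤ) :
    Function.Surjective (toZcol A h k) := by
  rintro ⟨x, hx, hx'⟩
  obtain ⟨w, hw, h0⟩ := (raw1 A h).exists_tot k x hx hx'
  exact ⟨⟨w, hw⟩, Subtype.ext h0⟩

theorem toZrow_surj (A : DC K) (h : ColsRowsExact A) (k : ℤ) :
    Function.Surjective (toZrow A h k) := by
  rintro ⟨x, hx, hx'⟩
  obtain ⟨w, hw, h0⟩ := (raw2 A h).exists_tot k x hx hx'
  refine ⟨⟨_, hw.flip⟩, Subtype.ext ?_⟩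
  change w (k - k) = x
  rw [sub_self, h0]

/-- Class in the column cohomology. -/
def fcol (A : DC K) (h : ColsRowsExact A) (k : ℤ) : T A k →ₗ[K] Hcol A k :=
  (Submodule.mkQ _).comp (toZcol A h k)

/-- Class in the row cohomology. -/
def frow (A : DC K) (h : ColsRowsExact A) (k : ℤ) : T A k →ₗ[K] Hrow A k :=
  (Submodule.mkQ _).comp (toZrow A h k)

theorem mem_ker_fcol (A : DC K) (h : ColsRowsExact A) (k : ℤ) (w : T A k) :
    w ∈ LinearMap.ker (fcol A h k) ↔ IsBd A.X A.d A.d' k w.1 := by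
  have : w ∈ LinearMap.ker (fcol A h k) ↔ ∃ v ∈ A.X 0 (k - 1), A.d' v = w.1 0 := by
    rw [LinearMap.mem_ker]
    change Submodule.Quotient.mk _ = _ ↔ _
    rw [Submodule.Quotient.mk_eq_zero]
    rfl
  rw [this]
  exact ⟨fun ⟨v, hv, e⟩ => (raw1 A h).bd_of k _ w.2 v hv e, (raw1 A h).of_bd k _⟩

theorem mem_ker_frow (A : DC K) (h : ColsRowsExact A) (k : ℤ) (w : T A k) :
    w ∈ LinearMap.ker (frow A h k) ↔ IsBd A.X A.d A.d' k w.1 := by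
  have : w ∈ LinearMap.ker (frow A h k) ↔ ∃ v ∈ A.X (k - 1) 0, A.d v = w.1 k := by
    rw [LinearMap.mem_ker]
    change Submodule.Quotient.mk _ = _ ↔ _
    rw [Submodule.Quotient.mk_eq_zero]
    rfl
  rw [this]
  constructor
  · rintro ⟨v, hv, e⟩
    have := ((raw2 A h).bd_of k _ (IsTot.flip w.2) v hv (by simpa using e)).flip
    simpa using this
  · intro hb
    simpa using (raw2 A h).of_bd k _ hb.flip

/-- The zigzag isomorphism. -/
noncomputable def zig (A : DC K) (h : ColsRowsExact A) (k : ℤ) : Hcol A k ≃ₗ[K] Hrow A k :=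
  ((fcol A h k).quotKerEquivOfSurjective
      ((Submodule.mkQ_surjective _).comp (toZcol_surj A h k))).symm ≪≫ₗ
    (Submodule.quotEquivOfEq _ _ (by
      ext w
      rw [mem_ker_fcol, mem_ker_frow])) ≪≫ₗ
    ((frow A h k).quotKerEquivOfSurjective
      ((Submodule.mkQ_surjective _).comp (toZrow_surj A h k)))

theorem zig_apply (A : DC K) (h : ColsRowsExact A) (k : ℤ) (w : T A k) :
    zig A h k (fcol A h k w) = frow A h k w := by
  have : ((fcol A h k).quotKerEquivOfSurjective
      ((Submodule.mkQ_surjective _).comp (toZcol_surj A h k))).symm (fcol A h k w)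
      = Submodule.Quotient.mk w := by
    rw [LinearEquiv.symm_apply_eq]
    rfl
  simp only [zig, LinearEquiv.trans_apply]
  rw [this]
  rfl

end

end S10

open S10 in
/-- zigzag lemma: for every first-quadrant double complex whose columns
`(A^{b,•}, d')`, `b > 0`, and rows `(A^{•,b'}, d)`, `b' > 0`, are exact, there is a canonical
isomorphism `H^k(A^{0,•}, d') ≅ H^k(A^{•,0}, d)` for every `k`; and this isomorphism is
natural with respect to morphisms of double complexes (commuting or anticommuting with both
differentials). -/
theorem statement10 (K : Type) [Field K] :
    ∃ e : ∀ (A : DC K), ColsRowsExact A → ∀ k : ℤ, Hcol A k ≃ₗ[K] Hrow A k,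
      ∀ (A B : DC K) (hA : ColsRowsExact A) (hB : ColsRowsExact B)
        (Φ : A.V →ₗ[K] B.V), IsHom A B Φ →
        ∀ (k : ℤ) (x : Zcol A k) (y : Zrow A k),
          e A hA k (Submodule.Quotient.mk x) = Submodule.Quotient.mk y →
          ∀ (x' : Zcol B k) (y' : Zrow B k),
            (x' : B.V) = Φ (x : A.V) → (y' : B.V) = Φ (y : A.V) →
            e B hB k (Submodule.Quotient.mk x') = Submodule.Quotient.mk y' := by
  refine ⟨fun A h k => zig A h k, ?_⟩
  intro A B hA hB Φ hΦ k x y hxy x' y' hx' hy'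
  obtain ⟨w, rfl⟩ := toZcol_surj A hA k x
  have h1 : frow A hA k w = Submodule.Quotient.mk y := by
    rw [← zig_apply]; exact hxy
  have h2 : ∃ v ∈ A.X (k - 1) 0, A.d v = w.1 k - y := by
    have h1' : Submodule.Quotient.mk (toZrow A hA k w) = Submodule.Quotient.mk y := h1
    rw [Submodule.Quotient.eq] at h1'
    exact h1'
  obtain ⟨v, hv, hvy⟩ := h2
  have hw : IsTot B.X B.d B.d' k (fun i => Φ (w.1 i)) := by
    refine ⟨fun i => hΦ.1 _ _ _ (w.2.1 i), fun i => ?_⟩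
    have h3 := congrArg Φ (w.2.2 i)
    rw [map_add, map_zero] at h3
    rcases hΦ.2 with ⟨ha, hb⟩ | ⟨ha, hb⟩
    · rw [ha, hb] at h3; exact h3
    · rw [ha, hb, ← neg_add, neg_eq_zero] at h3; exact h3
  have hxe : x' = toZcol B hB k ⟨_, hw⟩ := Subtype.ext hx'
  have h4 := zig_apply B hB k ⟨_, hw⟩
  rw [hxe]
  refine h4.trans ?_
  change Submodule.Quotient.mk (toZrow B hB k ⟨_, hw⟩) = _
  rw [Submodule.Quotient.eq]
  change ∃ v ∈ B.X (k - 1) 0, B.d v = Φ (w.1 k) - y'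
  rw [hy', ← map_sub, ← hvy]
  rcases hΦ.2 with ⟨ha, hb⟩ | ⟨ha, hb⟩
  · exact ⟨Φ v, hΦ.1 _ _ _ hv, (ha v).symm⟩
  · exact ⟨-Φ v, neg_mem (hΦ.1 _ _ _ hv), by rw [map_neg, ha v]⟩
end

section
/- (Spectral resolution lemma) Let (C^{•,•}, d) be a bi-indexed differential complex whose differential preserves the filtration induced by the first index, and let (E^{•,•,•}, ∂) together with ι be a spectral resolution of (C^{•,•}, d). Then, for every k ≥ 1 and all integers a, b, the map induced by ι is an isomorphism ᴵC_k^{a,b} ≅ ᴵE_k^{a,b} between the k-th pages of the spectral sequences induced by the filtrations by the first index, and these isomorphisms are compatible with the differentials of the pages. -/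
namespace S11

variable {K : Type} [Field K]

section TripleComplex

variable {V : Type} [AddCommGroup V] [Module K V]

/-- `Tot^n(E) = ⨁_{a+b+c = n} E^{a,b,c}`. -/
def TotE (X : ℤ → ℤ → ℤ → Submodule K V) (n : ℤ) : Submodule K V :=
  ⨆ (a : ℤ) (b : ℤ) (c : ℤ) (_ : a + b + c = n), X a b c

/-- `E^{≥a} = ⨁_{a' ≥ a, b, c} E^{a',b,c}`. -/
def GeE (X : ℤ → ℤ → ℤ → Submodule K V) (a : ℤ) : Submodule K V :=
  ⨆ (a' : ℤ) (_ : a ≤ a') (b : ℤ) (c : ℤ), X a' b c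

/-- The projection onto the graded piece `E^{p}` of the decomposition. -/
noncomputable def projE (X : ℤ → ℤ → ℤ → Submodule K V)
    [DirectSum.Decomposition (fun p : ℤ × ℤ × ℤ => X p.1 p.2.1 p.2.2)]
    (p : ℤ × ℤ × ℤ) (x : V) : V :=
  (DirectSum.decompose (fun p : ℤ × ℤ × ℤ => X p.1 p.2.1 p.2.2) x p : V)

/-- The numerator `Z` of the `k`-th page in position `(a,b)`:
`{x ∈ Tot^{a+b}(E) ∩ E^{≥a} : ∂x ∈ E^{≥a+k}}`. -/
def ZE (X : ℤ → ℤ → ℤ → Submodule K V) (dE : V →ₗ[K] V) (a b : ℤ) (k : ℕ) :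
    Submodule K V :=
  (TotE X (a + b) ⊓ GeE X a) ⊓ Submodule.comap dE (GeE X (a + k))

/-- The denominator of the `k`-th page in position `(a,b)`:
`Z ∩ (E^{≥a+1} + ∂E^{≥a-k+1})`. -/
def DenE (X : ℤ → ℤ → ℤ → Submodule K V) (dE : V →ₗ[K] V) (a b : ℤ) (k : ℕ) :
    Submodule K V :=
  ZE X dE a b k ⊓ (GeE X (a + 1) ⊔ Submodule.map dE (GeE X (a - k + 1)))

end TripleComplex

section BiComplex

variable {U : Type} [AddCommGroup U] [Module K U]

/-- `Tot^n(C) = ⨁_{a+b = n} C^{a,b}`. -/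
def TotC (Y : ℤ → ℤ → Submodule K U) (n : ℤ) : Submodule K U :=
  ⨆ (a : ℤ) (b : ℤ) (_ : a + b = n), Y a b

/-- `C^{≥a} = ⨁_{a' ≥ a, b} C^{a',b}`. -/
def GeC (Y : ℤ → ℤ → Submodule K U) (a : ℤ) : Submodule K U :=
  ⨆ (a' : ℤ) (_ : a ≤ a') (b : ℤ), Y a' b

/-- The numerator `Z` of the `k`-th page of `C` in position `(a,b)`. -/
def ZC (Y : ℤ → ℤ → Submodule K U) (dC : U →ₗ[K] U) (a b : ℤ) (k : ℕ) :
    Submodule K U :=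
  (TotC Y (a + b) ⊓ GeC Y a) ⊓ Submodule.comap dC (GeC Y (a + k))

/-- The denominator of the `k`-th page of `C` in position `(a,b)`. -/
def DenC (Y : ℤ → ℤ → Submodule K U) (dC : U →ₗ[K] U) (a b : ℤ) (k : ℕ) :
    Submodule K U :=
  ZC Y dC a b k ⊓ (GeC Y (a + 1) ⊔ Submodule.map dC (GeC Y (a - k + 1)))

end BiComplex

end S11

namespace S11

section Generic

variable {K : Type} [Field K] {V : Type} [AddCommGroup V] [Module K V]
  {I : Type} [DecidableEq I] (M : I → Submodule K V) [DirectSum.Decomposition M]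

/-- Generic projection to a graded piece, as a linear map. -/
noncomputable def pr (i : I) : V →ₗ[K] V where
  toFun x := (DirectSum.decompose M x i : V)
  map_add' x y := by simp [DirectSum.decompose_add]
  map_smul' r x := by
    simp only [DirectSum.decompose_smul, RingHom.id_apply]
    rfl

theorem pr_mem (i : I) (x : V) : pr M i x ∈ M i := (DirectSum.decompose M x i).2

theorem pr_same {i : I} {x : V} (hx : x ∈ M i) : pr M i x = x :=
  DirectSum.decompose_of_mem_same M hx

theorem pr_ne {i j : I} {x : V} (hx : x ∈ M i) (hij : i ≠ j) : pr M j x = 0 :=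
  DirectSum.decompose_of_mem_ne M hx hij

theorem pr_induct (N : Submodule K V) (x : V) (h : ∀ i, pr M i x ∈ N) : x ∈ N := by
  classical
  rw [← DirectSum.sum_support_decompose M x]
  exact Submodule.sum_mem _ (fun i _ => h i)

/-- Elements supported in a set of indices. -/
noncomputable def supp (S : I → Prop) : Submodule K V :=
  ⨅ (i : I) (_ : ¬ S i), LinearMap.ker (pr M i)

theorem mem_supp {S : I → Prop} {x : V} : x ∈ supp M S ↔ ∀ i, ¬ S i → pr M i x = 0 := by
  simp [supp, Submodule.mem_iInf]

theorem le_supp {S : I → Prop} {i : I} (hi : S i) : M i ≤ supp M S := by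
  intro x hx
  rw [mem_supp]
  intro j hj
  exact pr_ne M hx (fun h => hj (h ▸ hi))

theorem supp_le {S : I → Prop} {N : Submodule K V} (h : ∀ i, S i → M i ≤ N) : supp M S ≤ N := by
  intro x hx
  rw [mem_supp] at hx
  apply pr_induct M
  intro i
  by_cases hi : S i
  · exact h i hi (pr_mem M i x)
  · rw [hx i hi]; exact N.zero_mem

end Generic

section Main

variable {K : Type} [Field K] {V : Type} [AddCommGroup V] [Module K V]
  (X : ℤ → ℤ → ℤ → Submodule K V)
  [DirectSum.Decomposition (fun p : ℤ × ℤ × ℤ => X p.1 p.2.1 p.2.2)]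

/-- The total family of graded pieces. -/
noncomputable abbrev pe (a b c : ℤ) : V →ₗ[K] V :=
  pr (fun p : ℤ × ℤ × ℤ => X p.1 p.2.1 p.2.2) (a, b, c)

theorem pe_mem (a b c : ℤ) (x : V) : pe X a b c x ∈ X a b c :=
  pr_mem (fun p : ℤ × ℤ × ℤ => X p.1 p.2.1 p.2.2) (a, b, c) x

theorem pe_same {a b c : ℤ} {x : V} (hx : x ∈ X a b c) : pe X a b c x = x :=
  pr_same (fun p : ℤ × ℤ × ℤ => X p.1 p.2.1 p.2.2) (i := (a, b, c)) hx

theorem pe_ne {a b c a' b' c' : ℤ} {x : V} (hx : x ∈ X a b c)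
    (h : ¬ (a = a' ∧ b = b' ∧ c = c')) : pe X a' b' c' x = 0 :=
  pr_ne (fun p : ℤ × ℤ × ℤ => X p.1 p.2.1 p.2.2) (i := (a, b, c)) hx
    (fun e => h (by simpa using e))

theorem mem_GeE {a : ℤ} {x : V} :
    x ∈ GeE X a ↔ ∀ a' b c, a' < a → pe X a' b c x = 0 := by
  have : GeE X a = supp (fun p : ℤ × ℤ × ℤ => X p.1 p.2.1 p.2.2) (fun p => a ≤ p.1) := by
    apply le_antisymm
    · unfold GeE
      refine iSup_le fun a' => iSup_le fun h => iSup_le fun b => iSup_le fun c => ?_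
      exact le_supp (fun p : ℤ × ℤ × ℤ => X p.1 p.2.1 p.2.2) (i := (a', b, c)) h
    · apply supp_le
      rintro ⟨a', b, c⟩ h
      exact le_iSup_of_le a' (le_iSup_of_le h (le_iSup_of_le b (le_iSup_of_le c le_rfl)))
  rw [this, mem_supp]
  constructor
  · intro h a' b c h'
    exact h (a', b, c) (by simpa using h')
  · rintro h ⟨a', b, c⟩ h'
    exact h a' b c (by simpa using h')

theorem mem_TotE {n : ℤ} {x : V} :
    x ∈ TotE X n ↔ ∀ a b c, a + b + c ≠ n → pe X a b c x = 0 := by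
  have : TotE X n = supp (fun p : ℤ × ℤ × ℤ => X p.1 p.2.1 p.2.2)
      (fun p => p.1 + p.2.1 + p.2.2 = n) := by
    apply le_antisymm
    · unfold TotE
      refine iSup_le fun a' => iSup_le fun b => iSup_le fun c => iSup_le fun h => ?_
      exact le_supp (fun p : ℤ × ℤ × ℤ => X p.1 p.2.1 p.2.2) (i := (a', b, c)) h
    · apply supp_le
      rintro ⟨a', b, c⟩ h
      exact le_iSup_of_le a' (le_iSup_of_le b (le_iSup_of_le c (le_iSup_of_le h le_rfl)))
  rw [this, mem_supp]
  constructor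
  · intro h a' b c h'
    exact h (a', b, c) h'
  · rintro h ⟨a', b, c⟩ h'
    exact h a' b c h'

variable {U : Type} [AddCommGroup U] [Module K U]
  (Y : ℤ → ℤ → Submodule K U) [DirectSum.Decomposition (fun p : ℤ × ℤ => Y p.1 p.2)]

/-- Projection for the bi-indexed family. -/
noncomputable abbrev pc (a b : ℤ) : U →ₗ[K] U :=
  pr (fun p : ℤ × ℤ => Y p.1 p.2) (a, b)

theorem mem_GeC {a : ℤ} {x : U} :
    x ∈ GeC Y a ↔ ∀ a' b, a' < a → pc Y a' b x = 0 := by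
  have : GeC Y a = supp (fun p : ℤ × ℤ => Y p.1 p.2) (fun p => a ≤ p.1) := by
    apply le_antisymm
    · unfold GeC
      refine iSup_le fun a' => iSup_le fun h => iSup_le fun b => ?_
      exact le_supp (fun p : ℤ × ℤ => Y p.1 p.2) (i := (a', b)) h
    · apply supp_le
      rintro ⟨a', b⟩ h
      exact le_iSup_of_le a' (le_iSup_of_le h (le_iSup_of_le b le_rfl))
  rw [this, mem_supp]
  constructor
  · intro h a' b h'
    exact h (a', b) (by simpa using h')
  · rintro h ⟨a', b⟩ h'
    exact h a' b (by simpa using h')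

theorem mem_TotC {n : ℤ} {x : U} :
    x ∈ TotC Y n ↔ ∀ a b, a + b ≠ n → pc Y a b x = 0 := by
  have : TotC Y n = supp (fun p : ℤ × ℤ => Y p.1 p.2) (fun p => p.1 + p.2 = n) := by
    apply le_antisymm
    · unfold TotC
      refine iSup_le fun a' => iSup_le fun b => iSup_le fun h => ?_
      exact le_supp (fun p : ℤ × ℤ => Y p.1 p.2) (i := (a', b)) h
    · apply supp_le
      rintro ⟨a', b⟩ h
      exact le_iSup_of_le a' (le_iSup_of_le b (le_iSup_of_le h le_rfl))
  rw [this, mem_supp]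
  constructor
  · intro h a' b h'
    exact h (a', b) h'
  · rintro h ⟨a', b⟩ h'
    exact h a' b h'

theorem GeE_anti {a a' : ℤ} (h : a ≤ a') : GeE X a' ≤ GeE X a := by
  intro x hx
  rw [mem_GeE] at hx ⊢
  intro p b c hp
  exact hx p b c (by omega)

/-- The degree condition on the differential. -/
def DegCond (dE : V →ₗ[K] V) : Prop :=
  ∀ a b c : ℤ, ∀ x ∈ X a b c,
      dE x ∈ ⨆ (a' : ℤ) (_ : a ≤ a') (b' : ℤ) (c' : ℤ) (_ : c' ≤ c + 1)
        (_ : a' + b' + c' = a + b + c + 1), X a' b' c'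

variable {X}

theorem dE_hom {dE : V →ₗ[K] V} (hd : DegCond X dE) {a b c a' b' c' : ℤ} {x : V}
    (hx : x ∈ X a b c) (h : ¬ (a ≤ a' ∧ c' ≤ c + 1 ∧ a' + b' + c' = a + b + c + 1)) :
    pe X a' b' c' (dE x) = 0 := by
  have h1 := hd a b c x hx
  have h2 : (⨆ (a' : ℤ) (_ : a ≤ a') (b' : ℤ) (c' : ℤ) (_ : c' ≤ c + 1)
        (_ : a' + b' + c' = a + b + c + 1), X a' b' c') ≤ LinearMap.ker (pe X a' b' c') := by
    refine iSup_le fun a1 => iSup_le fun i1 => iSup_le fun b1 => iSup_le fun c1 =>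
      iSup_le fun i2 => iSup_le fun i3 => ?_
    intro z hz
    rw [LinearMap.mem_ker]
    apply pe_ne X hz
    rintro ⟨rfl, rfl, rfl⟩
    exact h ⟨i1, i2, i3⟩
  exact h2 h1

theorem dE_comp {dE : V →ₗ[K] V} (hd : DegCond X dE) {a' b' c' : ℤ} {y : V}
    (h : ∀ a b c, a ≤ a' → c' ≤ c + 1 → a' + b' + c' = a + b + c + 1 → pe X a b c y = 0) :
    pe X a' b' c' (dE y) = 0 := by
  have : y ∈ LinearMap.ker (pe X a' b' c' ∘ₗ dE) := by
    apply pr_induct (fun p : ℤ × ℤ × ℤ => X p.1 p.2.1 p.2.2)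
    rintro ⟨a, b, c⟩
    rw [LinearMap.mem_ker, LinearMap.comp_apply]
    by_cases hc : a ≤ a' ∧ c' ≤ c + 1 ∧ a' + b' + c' = a + b + c + 1
    · have := h a b c hc.1 hc.2.1 hc.2.2
      unfold pe at this
      rw [this]; simp
    · exact dE_hom hd (pe_mem X a b c y) hc
  exact this

theorem dE_Ge {dE : V →ₗ[K] V} (hd : DegCond X dE) {p : ℤ} {y : V} (hy : y ∈ GeE X p) :
    dE y ∈ GeE X p := by
  rw [mem_GeE] at hy ⊢
  intro a b c h
  apply dE_comp hd
  intro a1 b1 c1 h1 _ _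
  exact hy _ _ _ (by omega)

theorem dE_Tot {dE : V →ₗ[K] V} (hd : DegCond X dE) {n : ℤ} {y : V} (hy : y ∈ TotE X n) :
    dE y ∈ TotE X (n + 1) := by
  rw [mem_TotE] at hy ⊢
  intro a b c h
  apply dE_comp hd
  intro a1 b1 c1 _ _ h3
  exact hy _ _ _ (by omega)

theorem dE_top {dE : V →ₗ[K] V} (hd : DegCond X dE) {p b c : ℤ} {y : V} (hy : y ∈ GeE X p)
    (htop : ∀ b c', c < c' → pe X p b c' y = 0) :
    pe X p b (c + 1) (dE (pe X p b c y)) = pe X p b (c + 1) (dE y) := by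
  rw [← sub_eq_zero, ← map_sub, ← map_sub]
  apply dE_comp hd
  intro a1 b1 c1 h1 h2 h3
  rw [mem_GeE] at hy
  rw [map_sub]
  by_cases e : p = a1 ∧ b = b1 ∧ c = c1
  · obtain ⟨rfl, rfl, rfl⟩ := e
    rw [pe_same X (pe_mem X _ _ _ _), sub_self]
  · rw [pe_ne X (pe_mem X _ _ _ _) e, zero_sub, neg_eq_zero]
    rcases lt_or_eq_of_le h1 with h | h
    · exact hy _ _ _ h
    · subst h
      apply htop
      by_contra hc
      exact e ⟨rfl, by omega, by omega⟩

variable {Y}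

theorem pe_iota {ι : U →ₗ[K] V} (hι : ∀ a b : ℤ, ∀ x ∈ Y a b, ι x ∈ X a b 0) (a b : ℤ) (u : U) :
    pe X a b 0 (ι u) = ι (pc Y a b u) := by
  have : u ∈ LinearMap.ker (pe X a b 0 ∘ₗ ι - ι ∘ₗ pc Y a b) := by
    apply pr_induct (fun p : ℤ × ℤ => Y p.1 p.2)
    rintro ⟨a1, b1⟩
    have hm : pc Y a1 b1 u ∈ Y a1 b1 := pr_mem (fun p : ℤ × ℤ => Y p.1 p.2) (a1, b1) u
    change pc Y a1 b1 u ∈ _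
    generalize pc Y a1 b1 u = v at hm
    rw [LinearMap.mem_ker, LinearMap.sub_apply, LinearMap.comp_apply, LinearMap.comp_apply]
    by_cases e : a1 = a ∧ b1 = b
    · obtain ⟨rfl, rfl⟩ := e
      have h2 : pc Y a1 b1 v = v :=
        pr_same (fun p : ℤ × ℤ => Y p.1 p.2) (i := (a1, b1)) hm
      rw [pe_same X (hι _ _ _ hm), h2, sub_self]
    · have h2 : pc Y a b v = 0 :=
        pr_ne (fun p : ℤ × ℤ => Y p.1 p.2) (i := (a1, b1)) hm (fun h => e (by simpa using h))
      rw [pe_ne X (hι _ _ _ hm) (by tauto), h2, map_zero, sub_self]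
  rw [LinearMap.mem_ker, LinearMap.sub_apply, sub_eq_zero] at this
  exact this

theorem pe_iota_ne {ι : U →ₗ[K] V} (hι : ∀ a b : ℤ, ∀ x ∈ Y a b, ι x ∈ X a b 0) (a b c : ℤ)
    (hc : c ≠ 0) (u : U) : pe X a b c (ι u) = 0 := by
  have : u ∈ LinearMap.ker (pe X a b c ∘ₗ ι) := by
    apply pr_induct (fun p : ℤ × ℤ => Y p.1 p.2)
    rintro ⟨a1, b1⟩
    have hm : pc Y a1 b1 u ∈ Y a1 b1 := pr_mem (fun p : ℤ × ℤ => Y p.1 p.2) (a1, b1) u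
    rw [LinearMap.mem_ker, LinearMap.comp_apply]
    exact pe_ne X (hι _ _ _ hm) (by omega)
  exact this

theorem iota_Ge {ι : U →ₗ[K] V} (hι : ∀ a b : ℤ, ∀ x ∈ Y a b, ι x ∈ X a b 0)
    (hinj : ∀ a b : ℤ, ∀ x ∈ Y a b, ι x = 0 → x = 0) {p : ℤ} {u : U} :
    ι u ∈ GeE X p ↔ u ∈ GeC Y p := by
  rw [mem_GeE, mem_GeC]
  constructor
  · intro h a b hab
    apply hinj a b _ (pr_mem (fun p : ℤ × ℤ => Y p.1 p.2) (a, b) u)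
    have := h a b 0 hab
    rwa [pe_iota hι] at this
  · intro h a b c hab
    by_cases hc : c = 0
    · subst hc
      rw [pe_iota hι, h a b hab, map_zero]
    · exact pe_iota_ne hι a b c hc u

theorem iota_Tot {ι : U →ₗ[K] V} (hι : ∀ a b : ℤ, ∀ x ∈ Y a b, ι x ∈ X a b 0)
    {p : ℤ} {u : U} (h : u ∈ TotC Y p) : ι u ∈ TotE X p := by
  rw [mem_TotC] at h
  rw [mem_TotE]
  intro a b c hab
  by_cases hc : c = 0
  · subst hc
    rw [pe_iota hι, h a b (by omega), map_zero]
  · exact pe_iota_ne hι a b c hc u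

theorem X_Ge {a b c : ℤ} {x : V} (hx : x ∈ X a b c) {p : ℤ} (h : p ≤ a) : x ∈ GeE X p := by
  rw [mem_GeE]
  intro a1 b1 c1 h1
  exact pe_ne X hx (by omega)

theorem X_Tot {a b c : ℤ} {x : V} (hx : x ∈ X a b c) {p : ℤ} (h : a + b + c = p) :
    x ∈ TotE X p := by
  rw [mem_TotE]
  intro a1 b1 c1 h1
  exact pe_ne X hx (by omega)

theorem Y_Ge {a b : ℤ} {x : U} (hx : x ∈ Y a b) {p : ℤ} (h : p ≤ a) : x ∈ GeC Y p := by
  exact (le_iSup_of_le a (le_iSup_of_le h (le_iSup_of_le b le_rfl)) : Y a b ≤ GeC Y p) hx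

theorem Y_Tot {a b : ℤ} {x : U} (hx : x ∈ Y a b) {p : ℤ} (h : a + b = p) : x ∈ TotC Y p := by
  exact (le_iSup_of_le a (le_iSup_of_le b (le_iSup_of_le h le_rfl)) : Y a b ≤ TotC Y p) hx

theorem step {dE : V →ₗ[K] V} (hd : DegCond X dE) (hdd : ∀ x, dE (dE x) = 0)
    (hXvanish : ∀ a b c : ℤ, a < 0 ∨ b < 0 ∨ c < 0 → X a b c = ⊥)
    {ι : U →ₗ[K] V} (hι : ∀ a b : ℤ, ∀ x ∈ Y a b, ι x ∈ X a b 0)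
    (hR4a : ∀ a b : ℤ, ∀ x ∈ X a b 0,
      (pe X a b 1 (dE x) = 0 ↔ ∃ u ∈ Y a b, ι u = x))
    (hR4b : ∀ a b c : ℤ, 0 ≤ c → ∀ x ∈ X a b (c + 1),
      (pe X a b (c + 2) (dE x) = 0 ↔ ∃ y ∈ X a b c, pe X a b (c + 1) (dE y) = x))
    (p n : ℤ) (u : U) (m : ℕ) : ∀ y : V, y ∈ TotE X n → y ∈ GeE X p →
      (∀ b c : ℤ, (m : ℤ) ≤ c → pe X p b c y = 0) → dE y - ι u ∈ GeE X (p + 1) →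
      ∃ x ∈ GeC Y p, x ∈ TotC Y n ∧ ∃ z ∈ GeE X p, z ∈ TotE X (n - 1) ∧
        y - ι x - dE z ∈ GeE X (p + 1) := by
  induction m with
  | zero =>
    intro y hT hG htop _
    refine ⟨0, zero_mem _, zero_mem _, 0, zero_mem _, zero_mem _, ?_⟩
    simp only [map_zero, sub_zero]
    rw [mem_GeE] at hG ⊢
    intro a b c h
    rcases lt_or_eq_of_le (Int.lt_add_one_iff.mp h) with h | h
    · exact hG _ _ _ h
    · subst h
      by_cases hc : 0 ≤ c
      · exact htop b c (by simpa using hc)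
      · have := pe_mem X a b c y
        rw [hXvanish a b c (by omega)] at this
        simpa using this
  | succ m ih =>
    intro y hT hG htop hdy
    have key : pe X p (n - p - m) (m + 1) (dE (pe X p (n - p - m) m y)) = 0 := by
      rw [dE_top hd hG (fun b c' h => htop b c' (by push_cast; omega))]
      have := (mem_GeE X).1 hdy p (n - p - m) (m + 1) (by omega)
      rwa [map_sub, pe_iota_ne hι _ _ _ (by omega), sub_zero] at this
    have hmem := pe_mem X p (n - p - m) m y
    rcases m with _ | m
    · simp only [Nat.cast_zero, sub_zero, zero_add] at *
      obtain ⟨v, hv, hvy⟩ := (hR4a _ _ _ hmem).1 key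
      refine ⟨v, Y_Ge hv le_rfl, Y_Tot hv (by omega), 0, zero_mem _, zero_mem _, ?_⟩
      rw [map_zero, sub_zero, hvy]
      rw [mem_GeE] at hG ⊢
      rw [mem_TotE] at hT
      intro a b c h
      rw [map_sub]
      by_cases e : p = a ∧ n - p = b ∧ 0 = c
      · obtain ⟨rfl, rfl, rfl⟩ := e
        rw [pe_same X hmem, sub_self]
      · rw [pe_ne X hmem e, sub_zero]
        rcases lt_or_eq_of_le (Int.lt_add_one_iff.mp h) with h | h
        · exact hG _ _ _ h
        · subst h
          by_cases hc : 0 ≤ c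
          · by_cases hc1 : 1 ≤ c
            · exact htop b c (by simpa using hc1)
            · exact hT _ _ _ (by omega)
          · have := pe_mem X a b c y
            rw [hXvanish a b c (by omega)] at this
            simpa using this
    · push_cast at hmem key
      rw [show (m : ℤ) + 1 + 1 = m + 2 by ring] at key
      obtain ⟨z, hz, hzy⟩ := (hR4b _ _ _ (by omega) _ hmem).1 key
      have hzG : z ∈ GeE X p := X_Ge hz le_rfl
      have hzT : z ∈ TotE X (n - 1) := X_Tot hz (by omega)
      have hdzT : dE z ∈ TotE X n := by
        have := dE_Tot hd hzT
        rwa [sub_add_cancel] at this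
      obtain ⟨x, hx1, hx2, z', hz1, hz2, h⟩ := ih (y - dE z) (sub_mem hT hdzT)
        (sub_mem hG (dE_Ge hd hzG)) (by
          intro b c hc
          push_cast at hc htop
          rw [map_sub]
          by_cases e : c = m + 1 ∧ b = n - p - (m + 1)
          · obtain ⟨rfl, rfl⟩ := e
            rw [hzy, sub_self]
          · rw [dE_hom hd hz (by omega), sub_zero]
            by_cases e' : c = m + 1
            · exact (mem_TotE X).1 hT _ _ _ (by omega)
            · exact htop b c (by omega)) (by
          rw [map_sub, hdd, sub_zero]; exact hdy)
      refine ⟨x, hx1, hx2, z + z', add_mem hzG hz1, add_mem hzT hz2, ?_⟩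
      rw [map_add]
      convert h using 1
      abel

theorem stepAll {dE : V →ₗ[K] V} {dC : U →ₗ[K] U} (hd : DegCond X dE) (hdd : ∀ x, dE (dE x) = 0)
    (hXvanish : ∀ a b c : ℤ, a < 0 ∨ b < 0 ∨ c < 0 → X a b c = ⊥)
    {ι : U →ₗ[K] V} (hι : ∀ a b : ℤ, ∀ x ∈ Y a b, ι x ∈ X a b 0)
    (hinj : ∀ a b : ℤ, ∀ x ∈ Y a b, ι x = 0 → x = 0)
    (hR1 : ∀ x : U, ι (dC x) = dE (ι x))
    (hR4a : ∀ a b : ℤ, ∀ x ∈ X a b 0,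
      (pe X a b 1 (dE x) = 0 ↔ ∃ u ∈ Y a b, ι u = x))
    (hR4b : ∀ a b c : ℤ, 0 ≤ c → ∀ x ∈ X a b (c + 1),
      (pe X a b (c + 2) (dE x) = 0 ↔ ∃ y ∈ X a b c, pe X a b (c + 1) (dE y) = x))
    (n : ℤ) (m : ℕ) : ∀ (p : ℤ) (u : U) (y : V), y ∈ TotE X n → y ∈ GeE X p →
      dE y - ι u ∈ GeE X (p + m) →
      ∃ x ∈ GeC Y p, x ∈ TotC Y n ∧ ∃ z ∈ GeE X p, z ∈ TotE X (n - 1) ∧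
        y - ι x - dE z ∈ GeE X (p + m) := by
  induction m with
  | zero =>
    intro p u y hT hG _
    refine ⟨0, zero_mem _, zero_mem _, 0, zero_mem _, zero_mem _, ?_⟩
    simpa using hG
  | succ m ih =>
    intro p u y hT hG hdy
    obtain ⟨x, hx1, hx2, z, hz1, hz2, h⟩ := step hd hdd hXvanish hι hR4a hR4b p n u
      (n - p + 1).toNat y hT hG (by
        intro b c hc
        by_cases hb : b < 0
        · have := pe_mem X p b c y
          rw [hXvanish p b c (by omega)] at this
          simpa using this
        · exact (mem_TotE X).1 hT _ _ _ (by omega))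
      (GeE_anti X (by push_cast; omega) hdy)
    have e1 : p + 1 + (m : ℤ) = p + ((m + 1 : ℕ) : ℤ) := by push_cast; ring
    have hdzT : dE z ∈ TotE X n := by
      have := dE_Tot hd hz2
      rwa [sub_add_cancel] at this
    obtain ⟨x', hx1', hx2', z', hz1', hz2', h'⟩ := ih (p + 1) (u - dC x) (y - ι x - dE z)
      (sub_mem (sub_mem hT (iota_Tot hι hx2)) hdzT) h (by
        rw [e1, map_sub, map_sub, map_sub, hdd, hR1]
        convert hdy using 1
        abel)
    refine ⟨x + x', add_mem hx1 ?_, add_mem hx2 hx2', z + z',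
      add_mem hz1 (GeE_anti X (by omega) hz1'), add_mem hz2 hz2', ?_⟩
    · rw [← iota_Ge hι hinj] at hx1' ⊢
      exact GeE_anti X (by omega) hx1'
    · rw [e1] at h'
      rw [map_add, map_add]
      convert h' using 1
      abel

theorem trunc {dE : V →ₗ[K] V} (hd : DegCond X dE) (p n : ℤ) {z : V} (hz : z ∈ GeE X p) :
    ∃ z' ∈ GeE X p, z' ∈ TotE X (n - 1) ∧
      ∀ a b c, a + b + c = n → pe X a b c (dE z') = pe X a b c (dE z) := by
  let N : Submodule K V :=
    { carrier := {z | ∃ z' ∈ GeE X p, z' ∈ TotE X (n - 1) ∧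
        ∀ a b c, a + b + c = n → pe X a b c (dE z') = pe X a b c (dE z)}
      zero_mem' := ⟨0, zero_mem _, zero_mem _, fun _ _ _ _ => rfl⟩
      add_mem' := by
        rintro x y ⟨x', h1, h2, h3⟩ ⟨y', g1, g2, g3⟩
        refine ⟨x' + y', add_mem h1 g1, add_mem h2 g2, fun a b c h => ?_⟩
        simp only [map_add, h3 a b c h, g3 a b c h]
      smul_mem' := by
        rintro r x ⟨x', h1, h2, h3⟩
        refine ⟨r • x', Submodule.smul_mem _ _ h1, Submodule.smul_mem _ _ h2, fun a b c h => ?_⟩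
        simp only [map_smul, h3 a b c h] }
  have : GeE X p ≤ N := by
    unfold GeE
    refine iSup_le fun a' => iSup_le fun h => iSup_le fun b => iSup_le fun c => ?_
    intro x hx
    by_cases e : a' + b + c = n - 1
    · exact ⟨x, X_Ge hx h, X_Tot hx e, fun _ _ _ _ => rfl⟩
    · refine ⟨0, zero_mem _, zero_mem _, fun a1 b1 c1 h1 => ?_⟩
      rw [map_zero, map_zero, dE_hom hd hx (by omega)]
  exact this hz

end Main

end S11

open S11 in
/-- spectral resolution lemma: let `(C^{•,•}, d)` be a bi-indexed
differential complex whose differential preserves the filtration induced by the first index,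
and let `(E^{•,•,•}, ∂)` together with `ι` be a spectral resolution of `(C^{•,•}, d)`. Then,
for every `k ≥ 1` and all integers `a, b`, the map induced by `ι` is an isomorphism
`ᴵC_k^{a,b} ≅ ᴵE_k^{a,b}` between the `k`-th pages of the spectral sequences induced by the
filtrations by the first index (compatibly with the differentials of the pages, which are
induced by `d` and `∂`). -/
theorem statement11
    {K : Type} [Field K]
    -- the bi-indexed differential complex (C^{•,•}, d)
    {U : Type} [AddCommGroup U] [Module K U]
    (Y : ℤ → ℤ → Submodule K U)
    (hYinternal : DirectSum.IsInternal (fun p : ℤ × ℤ => Y p.1 p.2))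
    (hYvanish : ∀ a b : ℤ, a < 0 ∨ b < 0 → Y a b = ⊥)
    (dC : U →ₗ[K] U)
    (hdCdeg : ∀ a b : ℤ, ∀ x ∈ Y a b,
      dC x ∈ ⨆ (a' : ℤ) (_ : a ≤ a') (b' : ℤ) (_ : a' + b' = a + b + 1), Y a' b')
    (hdCdC : ∀ x, dC (dC x) = 0)
    -- the triply indexed differential complex (E^{•,•,•}, ∂)
    {V : Type} [AddCommGroup V] [Module K V]
    (X : ℤ → ℤ → ℤ → Submodule K V)
    [DirectSum.Decomposition (fun p : ℤ × ℤ × ℤ => X p.1 p.2.1 p.2.2)]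
    (hXvanish : ∀ a b c : ℤ, a < 0 ∨ b < 0 ∨ c < 0 → X a b c = ⊥)
    (dE : V →ₗ[K] V)
    -- ∂ has total degree one, preserves the filtration by the first index (R2), and has no
    -- components `∂^{i,j,l}` with `l ≥ 2` (R3)
    (hdEdeg : ∀ a b c : ℤ, ∀ x ∈ X a b c,
      dE x ∈ ⨆ (a' : ℤ) (_ : a ≤ a') (b' : ℤ) (c' : ℤ) (_ : c' ≤ c + 1)
        (_ : a' + b' + c' = a + b + c + 1), X a' b' c')
    (hdEdE : ∀ x, dE (dE x) = 0)
    -- the injections ι : C^{a,b} ↪ E^{a,b,0}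
    (ι : U →ₗ[K] V)
    (hιmem : ∀ a b : ℤ, ∀ x ∈ Y a b, ι x ∈ X a b 0)
    (hιinj : ∀ a b : ℤ, ∀ x ∈ Y a b, ι x = 0 → x = 0)
    -- (R1) : ι ∘ d = ∂ ∘ ι
    (hR1 : ∀ x : U, ι (dC x) = dE (ι x))
    -- (R4) : for every a, b the sequence 0 → C^{a,b} → E^{a,b,0} → E^{a,b,1} → ⋯ with first
    -- map ι and subsequent maps ∂₃ = ∂^{0,0,1} is exact
    (hR4a : ∀ a b : ℤ, ∀ x ∈ X a b 0,
      (projE X (a, b, 1) (dE x) = 0 ↔ ∃ u ∈ Y a b, ι u = x))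
    (hR4b : ∀ a b c : ℤ, 0 ≤ c → ∀ x ∈ X a b (c + 1),
      (projE X (a, b, c + 2) (dE x) = 0 ↔ ∃ y ∈ X a b c, projE X (a, b, c + 1) (dE y) = x)) :
    ∀ k : ℕ, 1 ≤ k → ∀ a b : ℤ,
      (∀ x ∈ ZC Y dC a b k, ι x ∈ ZE X dE a b k) ∧
      (∀ x ∈ ZC Y dC a b k, (ι x ∈ DenE X dE a b k ↔ x ∈ DenC Y dC a b k)) ∧
      (∀ y ∈ ZE X dE a b k, ∃ x ∈ ZC Y dC a b k, y - ι x ∈ DenE X dE a b k) ∧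
      (∀ x ∈ ZC Y dC a b k, ι (dC x) = dE (ι x)) := by
  classical
  let _ : DirectSum.Decomposition (fun p : ℤ × ℤ => Y p.1 p.2) := hYinternal.chooseDecomposition
  have hd : DegCond X dE := hdEdeg
  intro k hk a b
  have hge : ∀ {p : ℤ} {u : U}, ι u ∈ GeE X p ↔ u ∈ GeC Y p := iota_Ge hιmem hιinj
  have h1 : ∀ x ∈ ZC Y dC a b k, ι x ∈ ZE X dE a b k := by
    rintro x ⟨⟨hT, hG⟩, hdx⟩
    refine ⟨⟨iota_Tot hιmem hT, hge.2 hG⟩, ?_⟩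
    change dE (ι x) ∈ GeE X (a + k)
    rw [← hR1]
    exact hge.2 hdx
  refine ⟨h1, ?_, ?_, fun x _ => hR1 x⟩
  · intro x hx
    constructor
    · rintro ⟨_, hs⟩
      refine ⟨hx, ?_⟩
      obtain ⟨w, hw, w2, ⟨z, hz, rfl⟩, hwz⟩ := Submodule.mem_sup.1 hs
      obtain ⟨z', hz1, hz2, hz3⟩ := trunc hd (a - k + 1) (a + b) hz
      have hw' : dE z' - ι x ∈ GeE X (a + 1) := by
        rw [mem_GeE] at hw ⊢
        intro a1 b1 c1 h
        by_cases e : a1 + b1 + c1 = a + b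
        · rw [map_sub, hz3 _ _ _ e, ← hwz, map_add, hw _ _ _ h, zero_add, sub_self]
        · have h4 : dE z' - ι x ∈ TotE X (a + b) := by
            refine sub_mem ?_ (iota_Tot hιmem hx.1.1)
            have := dE_Tot hd hz2
            rwa [sub_add_cancel] at this
          exact (mem_TotE X).1 h4 _ _ _ e
      have e1 : a - (k : ℤ) + 1 + k = a + 1 := by ring
      obtain ⟨x', hx1, _, z2, _, _, h⟩ := stepAll hd hdEdE hXvanish hιmem hιinj hR1 hR4a hR4b
        _ k (a - k + 1) x z' hz2 hz1 (by rw [e1]; exact hw')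
      rw [e1] at h
      refine Submodule.mem_sup.2 ⟨x - dC x', ?_, dC x', ⟨x', hx1, rfl⟩, by abel⟩
      rw [← hge]
      have := sub_mem (dE_Ge hd h) hw'
      rw [map_sub, map_sub, hdEdE, ← hR1] at this
      rw [map_sub]
      convert this using 1
      abel
    · rintro ⟨_, hs⟩
      refine ⟨h1 x hx, ?_⟩
      obtain ⟨w, hw, w2, ⟨z, hz, rfl⟩, rfl⟩ := Submodule.mem_sup.1 hs
      exact Submodule.mem_sup.2 ⟨ι w, hge.2 hw, ι (dC z), ⟨ι z, hge.2 hz, (hR1 z).symm⟩,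
        (map_add _ _ _).symm⟩
  · intro y hy
    obtain ⟨⟨hT, hG⟩, hdy⟩ := id hy
    change dE y ∈ GeE X (a + k) at hdy
    obtain ⟨x, hx1, hx2, z, hz1, hz2, h⟩ := stepAll hd hdEdE hXvanish hιmem hιinj hR1 hR4a hR4b
        _ k a 0 y hT hG (by rw [map_zero, sub_zero]; exact hdy)
    have hx : x ∈ ZC Y dC a b k := by
      refine ⟨⟨hx2, hx1⟩, ?_⟩
      change dC x ∈ GeC Y (a + k)
      rw [← hge, hR1]
      have := sub_mem hdy (dE_Ge hd h)
      rw [map_sub, map_sub, hdEdE] at this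
      convert this using 1
      abel
    refine ⟨x, hx, sub_mem hy (h1 x hx), ?_⟩
    exact Submodule.mem_sup.2 ⟨_, GeE_anti X (by omega) h, dE z,
      ⟨z, GeE_anti X (by omega) hz1, rfl⟩, by abel⟩
end
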